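/- arXiv:2102.06549 — 2 statements merged into one kernel-verified Lean document; each statement's English description precedes it below -/
import Mathlib

section
/- Let A, C, σ, Ra be strictly positive real parameters. Then the Glukhovsky–Dolzhansky system has no nonconstant rational first integral; that is, if f, g ∈ ℝ[x,y,z] are nonzero coprime polynomials satisfying the identity X(f)·g = f·X(g) (which expresses that the rational function f/g is a first integral of the system), then both f and g are constant polynomials. -/
open MvPolynomial

/-- The derivation associated with the Glukhovsky–Dolzhansky system
`ẋ = A y z + C z − σ x, ẏ = −x z + Ra − y, ż = −z + x y`,
acting on `ℝ[x,y,z]` (variables `X 0 = x`, `X 1 = y`, `X 2 = z`). -/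
noncomputable def gdDeriv (A C σ Ra : ℝ) (f : MvPolynomial (Fin 3) ℝ) :
    MvPolynomial (Fin 3) ℝ :=
  (MvPolynomial.C A * X 1 * X 2 + MvPolynomial.C C * X 2 - MvPolynomial.C σ * X 0) *
      pderiv (0 : Fin 3) f
    + (-(X 0 * X 2) + MvPolynomial.C Ra - X 1) * pderiv (1 : Fin 3) f
    + (-X 2 + X 0 * X 1) * pderiv (2 : Fin 3) f


namespace GD

abbrev P := MvPolynomial (Fin 3) ℝ
abbrev B := MvPolynomial (Fin 2) ℝ

/-- Quadratic part of the vector field. -/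
noncomputable def D2 (A : ℝ) : Derivation ℝ P P :=
  (C A * X 1 * X 2 : P) • pderiv 0 + (-(X 0 * X 2) : P) • pderiv 1 + (X 0 * X 1 : P) • pderiv 2

/-- Linear part. -/
noncomputable def D1 (c σ : ℝ) : Derivation ℝ P P :=
  (C c * X 2 - C σ * X 0 : P) • pderiv 0 + (-X 1 : P) • pderiv 1 + (-X 2 : P) • pderiv 2

/-- Constant part. -/
noncomputable def D0 (r : ℝ) : Derivation ℝ P P := (C r : P) • pderiv 1

lemma D2_apply (A : ℝ) (f : P) : D2 A f = C A * X 1 * X 2 * pderiv 0 f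
    + -(X 0 * X 2) * pderiv 1 f + X 0 * X 1 * pderiv 2 f := by
  simp [D2]

lemma D1_apply (c σ : ℝ) (f : P) : D1 c σ f = (C c * X 2 - C σ * X 0) * pderiv 0 f
    + -X 1 * pderiv 1 f + -X 2 * pderiv 2 f := by
  simp [D1]

lemma D0_apply (r : ℝ) (f : P) : D0 r f = C r * pderiv 1 f := by
  simp [D0]

lemma gdDeriv_eq (A c σ r : ℝ) (f : P) :
    gdDeriv A c σ r f = D2 A f + D1 c σ f + D0 r f := by
  rw [D2_apply, D1_apply, D0_apply, gdDeriv]; ring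

lemma D2_X0 (A : ℝ) : D2 A (X 0) = C A * X 1 * X 2 := by
  simp [D2_apply, pderiv_X]
lemma D2_X1 (A : ℝ) : D2 A (X 1) = -(X 0 * X 2) := by
  simp [D2_apply, pderiv_X]
lemma D2_X2 (A : ℝ) : D2 A (X 2) = X 0 * X 1 := by
  simp [D2_apply, pderiv_X]
lemma D1_X0 (c σ : ℝ) : D1 c σ (X 0) = C c * X 2 - C σ * X 0 := by
  simp [D1_apply, pderiv_X]
lemma D1_X1 (c σ : ℝ) : D1 c σ (X 1) = - X 1 := by
  simp [D1_apply, pderiv_X]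
lemma D1_X2 (c σ : ℝ) : D1 c σ (X 2) = - X 2 := by
  simp [D1_apply, pderiv_X]
lemma D0_X0 (r : ℝ) : D0 r (X 0) = 0 := by
  simp [D0_apply, pderiv_X]
lemma D0_X1 (r : ℝ) : D0 r (X 1) = C r := by
  simp [D0_apply, pderiv_X]
lemma D0_X2 (r : ℝ) : D0 r (X 2) = 0 := by
  simp [D0_apply, pderiv_X]

/-- `u ↦ x² + A y²`, `v ↦ y² + z²`. -/
noncomputable def bet (A : ℝ) : B →ₐ[ℝ] P :=
  aeval ![X 0 ^ 2 + C A * X 1 ^ 2, X 1 ^ 2 + X 2 ^ 2]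

lemma bet_C (A t : ℝ) : bet A (C t) = C t := by simp [bet]
lemma bet_X0 (A : ℝ) : bet A (X 0) = X 0 ^ 2 + C A * X 1 ^ 2 := by simp [bet]
lemma bet_X1 (A : ℝ) : bet A (X 1) = X 1 ^ 2 + X 2 ^ 2 := by simp [bet]

/-- `w ↦ y²`. -/
noncomputable def phi (A : ℝ) : Polynomial B →+* P :=
  Polynomial.eval₂RingHom (bet A : B →+* P) (X 1 ^ 2)

lemma phi_C (A : ℝ) (b : B) : phi A (Polynomial.C b) = bet A b := by simp [phi]
lemma phi_X (A : ℝ) : phi A Polynomial.X = X 1 ^ 2 := by simp [phi]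

/-- Chain rule. -/
lemma deriv_bet (A : ℝ) (D : Derivation ℝ P P) (b : B) :
    D (bet A b) = bet A (pderiv 0 b) * D (X 0 ^ 2 + C A * X 1 ^ 2)
      + bet A (pderiv 1 b) * D (X 1 ^ 2 + X 2 ^ 2) := by
  induction b using MvPolynomial.induction_on with
  | C a => simp [bet_C, derivation_C]
  | add p q hp hq => simp only [map_add] at *; rw [hp, hq]; ring
  | mul_X p i hp =>
    rw [map_mul, Derivation.leibniz, hp]
    fin_cases i
    · simp [bet_X0, bet_X1, pderiv_X, Derivation.leibniz, Derivation.leibniz_pow, derivation_C]; ring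
    · simp [bet_X0, bet_X1, pderiv_X, Derivation.leibniz, Derivation.leibniz_pow, derivation_C]; ring

lemma D2_bet (A : ℝ) (b : B) : D2 A (bet A b) = 0 := by
  rw [deriv_bet]
  simp [Derivation.leibniz, Derivation.leibniz_pow, derivation_C, D2_X0, D2_X1, D2_X2]
  ring

lemma D2_phi (A : ℝ) (H : Polynomial B) :
    D2 A (phi A H) = -2 * (X 0 * X 1 * X 2) * phi A (Polynomial.derivative H) := by
  induction H using Polynomial.induction_on' with
  | add p q hp hq => simp only [map_add] at *; rw [hp, hq]; ring
  | monomial n b =>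
    rw [← Polynomial.C_mul_X_pow_eq_monomial]
    cases n with
    | zero => simp [phi_C, D2_bet]
    | succ n =>
      simp only [map_mul, map_pow, phi_C, phi_X, Derivation.leibniz, Derivation.leibniz_pow, D2_bet,
        D2_X1, Polynomial.derivative_C_mul_X_pow]
      simp
      ring

lemma phi_injective (A : ℝ) : Function.Injective (phi A) := by
  let th : Polynomial B →+* P := Polynomial.eval₂RingHom
    ((aeval ![X 0 + C A * X 1, X 1 + X 2] : B →ₐ[ℝ] P) : B →+* P) (X 1)
  let et : P →ₐ[ℝ] Polynomial B := aeval ![Polynomial.C (X 0) - Polynomial.C (C A) * Polynomial.X,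
    Polynomial.X, Polynomial.C (X 1) - Polynomial.X]
  have h1 : phi A = ((expand 2 : P →ₐ[ℝ] P) : P →+* P).comp th := by
    apply Polynomial.ringHom_ext'
    · apply MvPolynomial.ringHom_ext
      · intro r; simp [phi_C, bet_C, th]
      · intro i; fin_cases i <;> simp [phi_C, bet_X0, bet_X1, th]
    · simp [phi_X, th]
  have h2 : (et : P →+* Polynomial B).comp th = RingHom.id _ := by
    apply Polynomial.ringHom_ext'
    · apply MvPolynomial.ringHom_ext
      · intro r; simp [th]
      · intro i; fin_cases i <;> simp [th, et]
    · simp [th, et]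
  rw [h1]
  have h3 : Function.Injective th := by
    intro a b h
    have := congrArg et h
    have ha := congrArg (fun F => F a) h2
    have hb := congrArg (fun F => F b) h2
    simp at ha hb
    rw [← ha, ← hb, this]
  exact (expand_injective (by norm_num)).comp h3

/-- Diagonal sign changes. -/
noncomputable def rho (s : Fin 3 → ℝ) : P →ₐ[ℝ] P := aeval (fun i => C (s i) * X i)

lemma rho_C (s) (t : ℝ) : rho s (C t) = C t := by simp [rho]
lemma rho_X (s) (i : Fin 3) : rho s (X i) = C (s i) * X i := by simp [rho]

lemma rho_rho (s : Fin 3 → ℝ) (hs : ∀ i, s i * s i = 1) (f : P) : rho s (rho s f) = f := by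
  have : (rho s).comp (rho s) = AlgHom.id ℝ P := by
    apply MvPolynomial.algHom_ext
    intro i
    simp only [AlgHom.comp_apply, rho_X, map_mul, rho_C, AlgHom.id_apply]
    rw [← mul_assoc, ← C_mul, hs]; simp
  exact congrArg (fun F => F f) this

lemma rho_ne_zero (s : Fin 3 → ℝ) (hs : ∀ i, s i * s i = 1) {f : P} (hf : f ≠ 0) :
    rho s f ≠ 0 := by
  intro h
  apply hf
  rw [← rho_rho s hs f, h, map_zero]

lemma rho_phi (A : ℝ) (s : Fin 3 → ℝ) (hs : ∀ i, s i * s i = 1) (H : Polynomial B) :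
    rho s (phi A H) = phi A H := by
  have key : ∀ i, (C (s i) * X i : P) ^ 2 = X i ^ 2 := by
    intro i; rw [mul_pow, ← C_pow, pow_two (s i), hs]; simp
  have : ((rho s : P →ₐ[ℝ] P) : P →+* P).comp (phi A) = phi A := by
    apply Polynomial.ringHom_ext'
    · apply MvPolynomial.ringHom_ext
      · intro r; simp [phi_C, bet_C, rho_C]
      · intro i; fin_cases i <;> simp [phi_C, bet_X0, bet_X1, rho_C, rho_X, key]
    · simp [phi_X, rho_X, key]
  exact congrArg (fun F => F H) this

lemma D2_rho (A : ℝ) (s : Fin 3 → ℝ) (hs : ∀ i, s i * s i = 1) (f : P) :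
    D2 A (rho s f) = C (s 0 * s 1 * s 2) * rho s (D2 A f) := by
  induction f using MvPolynomial.induction_on with
  | C a => simp [rho_C, derivation_C]
  | add p q hp hq => simp only [map_add] at *; rw [hp, hq]; ring
  | mul_X p i hp =>
    have key : ∀ i, (C (s i) : P) * C (s i) = 1 := by
      intro i; rw [← C_mul, hs]; simp
    have k0 := key 0
    have k1 := key 1
    have k2 := key 2
    rw [map_mul, Derivation.leibniz, hp, Derivation.leibniz, rho_X, Derivation.leibniz]
    fin_cases i
    · simp [rho_X, rho_C, D2_X0, derivation_C]
      linear_combination (-C (s 0) * rho s p * C A * X 1 * X 2) * (k1 * C (s 2) * C (s 2) + k2)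
    · simp [rho_X, rho_C, D2_X1, derivation_C]
      linear_combination (C (s 1) * rho s p * X 0 * X 2) * (k0 * C (s 2) * C (s 2) + k2)
    · simp [rho_X, rho_C, D2_X2, derivation_C]
      linear_combination (-C (s 2) * rho s p * X 0 * X 1) * (k1 * C (s 0) * C (s 0) + k0)



/-- Parity decomposition. -/
noncomputable def comb (A : ℝ) (h : Fin 8 → Polynomial B) : P :=
  phi A (h 0) + X 0 * phi A (h 1) + X 1 * phi A (h 2) + X 2 * phi A (h 3)
    + X 1 * X 2 * phi A (h 4) + X 0 * X 2 * phi A (h 5) + X 0 * X 1 * phi A (h 6)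
    + X 0 * X 1 * X 2 * phi A (h 7)

/-- `x²`. -/
noncomputable def pp (A : ℝ) : Polynomial B :=
  Polynomial.C (X 0) - Polynomial.C (C A) * Polynomial.X
/-- `z²`. -/
noncomputable def rr : Polynomial B := Polynomial.C (X 1) - Polynomial.X

lemma phi_pp (A : ℝ) : phi A (pp A) = X 0 ^ 2 := by
  rw [pp, map_sub, map_mul, phi_C, phi_C, phi_X, bet_X0, bet_C]; ring
lemma phi_rr (A : ℝ) : phi A rr = X 2 ^ 2 := by
  rw [rr, map_sub, phi_C, phi_X, bet_X1]; ring

lemma exists_comb (A : ℝ) (f : P) : ∃ h, f = comb A h := by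
  induction f using MvPolynomial.induction_on with
  | C t =>
    refine ⟨![Polynomial.C (C t), 0, 0, 0, 0, 0, 0, 0], ?_⟩
    simp [comb, phi_C, bet_C]
  | add p q hp hq =>
    obtain ⟨h, rfl⟩ := hp
    obtain ⟨g, rfl⟩ := hq
    refine ⟨h + g, ?_⟩
    simp only [comb, Pi.add_apply, map_add]; ring
  | mul_X p i hp =>
    obtain ⟨h, rfl⟩ := hp
    fin_cases i
    · refine ⟨![pp A * h 1, h 0, pp A * h 6, pp A * h 5, pp A * h 7, h 3, h 2, h 4], ?_⟩
      simp [comb, phi_pp]; ring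
    · refine ⟨![Polynomial.X * h 2, Polynomial.X * h 6, h 0, Polynomial.X * h 4, h 3,
        Polynomial.X * h 7, h 1, h 5], ?_⟩
      simp [comb, phi_X]; ring
    · refine ⟨![rr * h 3, rr * h 5, rr * h 4, h 0, h 2, h 1, rr * h 7, h 6], ?_⟩
      simp [comb, phi_rr]; ring

lemma split_parity (s : Fin 3 → ℝ) (i : Fin 3) (hs : s i = -1) {p q : P} (hp : rho s p = p)
    (hq : rho s q = q) (h : p + X i * q = 0) : p = 0 ∧ q = 0 := by
  have h2 := congrArg (rho s) h
  rw [map_add, map_mul, hp, hq, rho_X, hs, map_zero] at h2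
  have h3 : (2 : P) * p = 0 := by
    simp at h2
    linear_combination h + h2
  have h4 : p = 0 := by simpa using h3
  refine ⟨h4, ?_⟩
  rw [h4, zero_add] at h
  exact (mul_eq_zero.mp h).resolve_left (X_ne_zero i)

lemma comb_eq_zero (A : ℝ) (h : Fin 8 → Polynomial B) (h0 : comb A h = 0) (i : Fin 8) :
    h i = 0 := by
  have inj : ∀ H, phi A H = 0 → H = 0 := fun H hH => phi_injective A (by rw [hH, map_zero])
  have hs0 : ∀ i, (![-1, 1, 1] : Fin 3 → ℝ) i * (![-1, 1, 1] : Fin 3 → ℝ) i = 1 := by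
    intro i; fin_cases i <;> simp
  have hs1 : ∀ i, (![1, -1, 1] : Fin 3 → ℝ) i * (![1, -1, 1] : Fin 3 → ℝ) i = 1 := by
    intro i; fin_cases i <;> simp
  have hs2 : ∀ i, (![1, 1, -1] : Fin 3 → ℝ) i * (![1, 1, -1] : Fin 3 → ℝ) i = 1 := by
    intro i; fin_cases i <;> simp
  have stepz : ∀ H G : Polynomial B, phi A H + X 2 * phi A G = 0 → H = 0 ∧ G = 0 := by
    intro H G hHG
    have := split_parity ![1, 1, -1] 2 (by simp) (rho_phi A _ hs2 H) (rho_phi A _ hs2 G) hHG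
    exact ⟨inj _ this.1, inj _ this.2⟩
  have stepy : ∀ H G H' G' : Polynomial B, (phi A H + X 2 * phi A G)
      + X 1 * (phi A H' + X 2 * phi A G') = 0 → H = 0 ∧ G = 0 ∧ H' = 0 ∧ G' = 0 := by
    intro H G H' G' hh
    have := split_parity ![1, -1, 1] 1 (by simp)
      (by simp [rho_phi A _ hs1, rho_X]) (by simp [rho_phi A _ hs1, rho_X]) hh
    have h1 := stepz _ _ this.1
    have h2 := stepz _ _ this.2
    exact ⟨h1.1, h1.2, h2.1, h2.2⟩
  have := split_parity ![-1, 1, 1] 0 (by simp)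
    (p := (phi A (h 0) + X 2 * phi A (h 3)) + X 1 * (phi A (h 2) + X 2 * phi A (h 4)))
    (q := (phi A (h 1) + X 2 * phi A (h 5)) + X 1 * (phi A (h 6) + X 2 * phi A (h 7)))
    (by simp [rho_phi A _ hs0, rho_X]) (by simp [rho_phi A _ hs0, rho_X])
    (by rw [← h0, comb]; ring)
  have h1 := stepy _ _ _ _ this.1
  have h2 := stepy _ _ _ _ this.2
  fin_cases i <;> tauto

lemma comb_inj (A : ℝ) (h g : Fin 8 → Polynomial B) (h0 : comb A h = comb A g) : h = g := by
  funext i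
  have := comb_eq_zero A (h - g) (by
    have : comb A (h - g) = comb A h - comb A g := by
      simp only [comb, Pi.sub_apply, map_sub]; ring
    rw [this, h0, sub_self]) i
  exact sub_eq_zero.mp this

open Polynomial in
/-- The first-order operator from the derivative of M H squared. -/
noncomputable def op (M H : Polynomial B) : Polynomial B :=
  derivative M * H + 2 * M * derivative H

lemma D2_comb (A : ℝ) (h : Fin 8 → Polynomial B) :
    D2 A (comb A h) = comb A ![
      -op (pp A * Polynomial.X * rr) (h 7),
      -op (Polynomial.X * rr) (h 4),
      -op (pp A * rr) (h 5),
      -op (pp A * Polynomial.X) (h 6),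
      -op (pp A) (h 1),
      -op (Polynomial.X) (h 2),
      -op rr (h 3),
      -op 1 (h 0)] := by
  have e1 : phi A (Polynomial.derivative (pp A)) = - C A := by
    simp [pp, phi_C, bet_C]
  have e2 : phi A (Polynomial.derivative rr) = - 1 := by
    simp [rr]
  simp only [comb, op, map_add, map_mul, Derivation.leibniz, D2_phi, D2_X0, D2_X1, D2_X2,
    Polynomial.derivative_mul, Polynomial.derivative_X, Polynomial.derivative_one, map_neg, map_one,
    map_zero, Matrix.cons_val, smul_eq_mul, e1, e2, phi_pp, phi_rr, phi_X, map_ofNat]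
  ring

lemma op_lemma (M H : Polynomial B) (k : ℕ) (hk : M.natDegree ≤ k + 1) (c : ℝ) (hc : c ≠ 0)
    (hM : M.coeff (k + 1) = C c) (hT : ∀ j, k ≤ j → (op M H).coeff j = 0) : H = 0 := by
  by_contra hH
  obtain ⟨d, hd⟩ : ∃ d, H.natDegree = d := ⟨_, rfl⟩
  have hl : H.coeff d ≠ 0 := by
    rw [← hd]; simpa using hH
  have hM' : (Polynomial.derivative M).natDegree ≤ k :=
    (Polynomial.natDegree_derivative_le M).trans (by omega)
  have h1 : (Polynomial.derivative M * H).coeff (k + d) = C c * ((k : B) + 1) * H.coeff d := by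
    rw [Polynomial.coeff_mul_add_eq_of_natDegree_le hM' hd.le, Polynomial.coeff_derivative, hM]
  have h2 : (M * Polynomial.derivative H).coeff (k + d) = C c * (H.coeff d * (d : B)) := by
    cases d with
    | zero =>
      rw [Polynomial.derivative_of_natDegree_zero hd]; simp
    | succ e =>
      have : (Polynomial.derivative H).natDegree ≤ e :=
        (Polynomial.natDegree_derivative_le H).trans (by omega)
      rw [show k + (e + 1) = (k + 1) + e by ring, Polynomial.coeff_mul_add_eq_of_natDegree_le hk this,
        Polynomial.coeff_derivative, hM]
      push_cast; ring
  have h3 := hT (k + d) (by omega)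
  rw [op, mul_assoc, Polynomial.coeff_add, h1, Polynomial.coeff_ofNat_mul, h2] at h3
  have h4 : C (c * (k + 1 + 2 * d)) * H.coeff d = 0 := by
    have e2 : (C 2 : B) = 2 := map_ofNat C 2
    rw [← h3]; simp [e2]; ring
  have h5 : (C (c * (k + 1 + 2 * d)) : B) ≠ 0 := by
    rw [Ne, C_eq_zero]; positivity
  exact (mul_ne_zero h5 hl) h4


lemma pp_deg (A : ℝ) : (pp A).natDegree ≤ 0 + 1 := by
  rw [pp]; compute_degree
lemma rr_deg : rr.natDegree ≤ 0 + 1 := by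
  rw [rr]; compute_degree
lemma XX_deg : (Polynomial.X : Polynomial B).natDegree ≤ 0 + 1 := by
  compute_degree
lemma pp_coeff (A : ℝ) : (pp A).coeff (0 + 1) = C (-A) := by
  simp [pp, Polynomial.coeff_X, Polynomial.coeff_C]
lemma rr_coeff : rr.coeff (0 + 1) = C (-1) := by
  simp [rr, Polynomial.coeff_X, Polynomial.coeff_C]
lemma XX_coeff : (Polynomial.X : Polynomial B).coeff (0 + 1) = C 1 := by
  simp [Polynomial.coeff_X]
lemma mul_deg' {M N : Polynomial B} {k : ℕ} (hM : M.natDegree ≤ k + 1) (hN : N.natDegree ≤ 0 + 1) :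
    (M * N).natDegree ≤ (k + 1) + 1 :=
  Polynomial.natDegree_mul_le_of_le hM hN
lemma mul_coeff' {M N : Polynomial B} {k : ℕ} (hM : M.natDegree ≤ k + 1) (hN : N.natDegree ≤ 0 + 1)
    {a b : ℝ} (ha : M.coeff (k + 1) = C a) (hb : N.coeff (0 + 1) = C b) :
    (M * N).coeff ((k + 1) + 1) = C (a * b) := by
  rw [show k + 1 + 1 = (k + 1) + (0 + 1) by ring, Polynomial.coeff_mul_add_eq_of_natDegree_le hM hN, ha, hb,
    C_mul]

lemma op_pxr (A : ℝ) (hA : A ≠ 0) (H : Polynomial B)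
    (hT : ∀ j, 2 ≤ j → (op (pp A * Polynomial.X * rr) H).coeff j = 0) : H = 0 :=
  op_lemma _ H _ (mul_deg' (mul_deg' (pp_deg A) XX_deg) rr_deg) _
    (by simpa using hA) (mul_coeff' (mul_deg' (pp_deg A) XX_deg) rr_deg
      (mul_coeff' (pp_deg A) XX_deg (pp_coeff A) XX_coeff) rr_coeff) hT

lemma op_pr (A : ℝ) (hA : A ≠ 0) (H : Polynomial B)
    (hT : ∀ j, 1 ≤ j → (op (pp A * rr) H).coeff j = 0) : H = 0 :=
  op_lemma _ H _ (mul_deg' (pp_deg A) rr_deg) _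
    (by simpa using hA) (mul_coeff' (pp_deg A) rr_deg (pp_coeff A) rr_coeff) hT

lemma op_px (A : ℝ) (hA : A ≠ 0) (H : Polynomial B)
    (hT : op (pp A * Polynomial.X) H = 0) : H = 0 :=
  op_lemma _ H _ (mul_deg' (pp_deg A) XX_deg) _
    (by simpa using hA) (mul_coeff' (pp_deg A) XX_deg (pp_coeff A) XX_coeff)
    (fun j _ => by simp [hT])

lemma op_xr (H : Polynomial B)
    (hT : op (Polynomial.X * rr) H = 0) : H = 0 :=
  op_lemma _ H _ (mul_deg' XX_deg rr_deg) _
    (by simp) (mul_coeff' XX_deg rr_deg XX_coeff rr_coeff)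
    (fun j _ => by simp [hT])

lemma op_p (A : ℝ) (hA : A ≠ 0) (H : Polynomial B) (hT : op (pp A) H = 0) : H = 0 :=
  op_lemma _ H _ (pp_deg A) _ (by simpa using hA) (pp_coeff A) (fun j _ => by simp [hT])
lemma op_x (H : Polynomial B) (hT : op Polynomial.X H = 0) : H = 0 :=
  op_lemma _ H _ XX_deg _ (by simp) XX_coeff (fun j _ => by simp [hT])
lemma op_r (H : Polynomial B) (hT : op rr H = 0) : H = 0 :=
  op_lemma _ H _ rr_deg _ (by simp) rr_coeff (fun j _ => by simp [hT])

lemma ker_D2 (A : ℝ) (hA : A ≠ 0) (f : P) (hf : D2 A f = 0) : ∃ b, f = bet A b := by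
  obtain ⟨h, rfl⟩ := exists_comb A f
  rw [D2_comb] at hf
  have H := comb_eq_zero A _ hf
  have H0 := H 0
  have H1 := H 1
  have H2 := H 2
  have H3 := H 3
  have H4 := H 4
  have H5 := H 5
  have H6 := H 6
  have H7 := H 7
  simp only [Matrix.cons_val, neg_eq_zero] at H0 H1 H2 H3 H4 H5 H6 H7
  have h7 := op_pxr A hA (h 7) (fun j _ => by simp [H0])
  have h4 := op_xr _ H1
  have h5 := op_pr A hA (h 5) (fun j _ => by simp [H2])
  have h6 := op_px A hA _ H3
  have h1 := op_p A hA _ H4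
  have h2 := op_x _ H5
  have h3 := op_r _ H6
  have h0 : Polynomial.derivative (h 0) = 0 := by
    simpa [op] using H7
  refine ⟨(h 0).coeff 0, ?_⟩
  have := Polynomial.eq_C_of_derivative_eq_zero h0
  rw [comb, h1, h2, h3, h4, h5, h6, h7, ← phi_C, ← this]
  simp

lemma exact_one (A : ℝ) (hA : A ≠ 0) (f : P) (a b c : B)
    (hf : D2 A f = bet A a + bet A b * X 1 ^ 2 + X 0 * X 2 * bet A c) : a = 0 ∧ b = 0 := by
  obtain ⟨h, rfl⟩ := exists_comb A f
  have e : bet A a + bet A b * X 1 ^ 2 + X 0 * X 2 * bet A c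
      = comb A ![Polynomial.C a + Polynomial.C b * Polynomial.X, 0, 0, 0, 0, Polynomial.C c, 0, 0] := by
    simp [comb, phi_C, phi_X]
  rw [D2_comb, e] at hf
  have H := congrFun (comb_inj A _ _ hf) 0
  simp only [Matrix.cons_val] at H
  have h7 := op_pxr A hA (h 7) (fun j hj => by
    rw [← neg_neg (op _ _), H]
    have h1 : j ≠ 0 := by omega
    have h2 : 1 ≠ j := by omega
    simp [Polynomial.coeff_C, Polynomial.coeff_X, h1, h2])
  rw [h7] at H
  have H2 : Polynomial.C a + Polynomial.C b * Polynomial.X = 0 := by rw [← H]; simp [op]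
  have H3 := congrArg (fun q => Polynomial.coeff q 0) H2
  have H4 := congrArg (fun q => Polynomial.coeff q 1) H2
  simp [Polynomial.coeff_C] at H3 H4
  exact ⟨H3, H4⟩

lemma exact_y (A : ℝ) (hA : A ≠ 0) (f : P) (t : Fin 8 → Polynomial B) (e : B)
    (ht : t 2 = Polynomial.C e) (hf : D2 A f = comb A t) : e = 0 := by
  obtain ⟨h, rfl⟩ := exists_comb A f
  rw [D2_comb] at hf
  have H := congrFun (comb_inj A _ _ hf) 2
  simp only [Matrix.cons_val] at H
  rw [ht] at H
  have h5 := op_pr A hA (h 5) (fun j hj => by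
    rw [← neg_neg (op _ _), H]
    have h1 : j ≠ 0 := by omega
    simp [Polynomial.coeff_C, h1])
  rw [h5] at H
  have H2 : Polynomial.C e = 0 := by rw [← H]; simp [op]
  simpa using H2


lemma pderiv_comm' (i j : Fin 2) (b : B) : pderiv i (pderiv j b) = pderiv j (pderiv i b) := by
  have : ⁅(pderiv i : Derivation ℝ B B), (pderiv j : Derivation ℝ B B)⁆ = 0 := by
    apply derivation_ext
    intro k
    rw [Derivation.commutator_apply]
    simp only [pderiv_X, Pi.single_apply]
    split_ifs <;> simp
  have h := congrArg (fun D : Derivation ℝ B B => D b) this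
  simp only [Derivation.commutator_apply, Derivation.zero_apply] at h
  exact sub_eq_zero.mp h

lemma dvd_pderiv_zero {n : ℕ} (b : MvPolynomial (Fin n) ℝ) (i : Fin n) (h : b ∣ pderiv i b) :
    pderiv i b = 0 := by
  by_contra h0
  obtain ⟨t, ht⟩ := h
  have hb : b ≠ 0 := by rintro rfl; simp at h0
  have htt : t ≠ 0 := by rintro rfl; simp [ht] at h0
  have hdeg : b.totalDegree ≤ (pderiv i b).totalDegree := by
    rw [ht, totalDegree_mul_of_isDomain hb htt]; omega
  obtain ⟨m, hm, hmd⟩ : ∃ m ∈ (pderiv i b).support, (m.degree) = (pderiv i b).totalDegree := by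
    obtain ⟨m, hm, hmd⟩ := Finset.exists_mem_eq_sup (pderiv i b).support
      (by simpa using h0) (fun s => s.sum fun _ e => e)
    exact ⟨m, hm, hmd.symm⟩
  rw [mem_support_iff, coeff_pderiv] at hm
  have hm2 : m + Finsupp.single i 1 ∈ b.support := by
    rw [mem_support_iff]; intro h; simp [h] at hm
  have := le_totalDegree hm2
  have e : ((m + Finsupp.single i 1).sum fun _ e => e) = m.degree + 1 := by
    change (m + Finsupp.single i 1).degree = _
    simp
  omega

lemma const_of_pderiv {n : ℕ} (b : MvPolynomial (Fin n) ℝ) (h : ∀ i, pderiv i b = 0) :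
    b = C (coeff 0 b) := by
  ext m
  rw [coeff_C]
  split_ifs with h0
  · rw [h0]
  · obtain ⟨i, hi⟩ : ∃ i, m i ≠ 0 := by
      by_contra hh; push Not at hh; exact h0 (by ext i; simp [hh])
    have e := coeff_pderiv (i := i) b (m - Finsupp.single i 1)
    have e2 : m - Finsupp.single i 1 + Finsupp.single i 1 = m := by
      ext j
      by_cases hj : j = i
      · subst hj; simp; omega
      · simp [Finsupp.single_apply, Ne.symm hj]
    rw [h i, e2] at e
    have e3 := e.symm
    simp only [coeff_zero] at e3
    rcases mul_eq_zero.mp e3 with h1 | h1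
    · exact h1
    · exfalso
      have : (0 : ℝ) < ((m - Finsupp.single i 1 : Fin n →₀ ℕ) i : ℝ) + 1 := by positivity
      exact this.ne' h1

lemma wronskian {n : ℕ} (a b : MvPolynomial (Fin n) ℝ) (hb : b ≠ 0)
    (h : ∀ i, b * pderiv i a - a * pderiv i b = 0) : ∃ t : ℝ, a = C t * b := by
  obtain ⟨a', b', g, hrel, rfl, rfl⟩ := UniqueFactorizationMonoid.exists_reduced_factors' a b hb
  have hg : g ≠ 0 := left_ne_zero_of_mul hb
  have hb' : b' ≠ 0 := right_ne_zero_of_mul hb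
  have h1 : ∀ i, b' * pderiv i a' = a' * pderiv i b' := by
    intro i
    have := h i
    simp only [pderiv_mul] at this
    have h2 : g * g * (b' * pderiv i a' - a' * pderiv i b') = 0 := by
      linear_combination this
    have := (mul_eq_zero.mp h2).resolve_left (mul_ne_zero hg hg)
    linear_combination this
  have hbc := const_of_pderiv b' (fun i => dvd_pderiv_zero b' i
    (hrel.symm.dvd_of_dvd_mul_left ⟨_, (h1 i).symm⟩))
  have hac := const_of_pderiv a' (fun i => dvd_pderiv_zero a' i
    (hrel.dvd_of_dvd_mul_left ⟨_, (h1 i)⟩))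
  have hne : coeff 0 b' ≠ 0 := by
    intro h0; rw [h0] at hbc; simp at hbc; exact hb' hbc
  refine ⟨coeff 0 a' / coeff 0 b', ?_⟩
  rw [hac, hbc]
  simp only [coeff_C, if_true]
  have : (C (coeff 0 a') : MvPolynomial (Fin n) ℝ) = C (coeff 0 a' / coeff 0 b') * C (coeff 0 b') := by
    rw [← C_mul, div_mul_cancel₀ _ hne]
  rw [this]; ring



lemma exists_Q (A k1 k2 k3 : ℝ) (g : P) (hg : g ≠ 0)
    (h : D2 A g = (C k1 * X 0 + C k2 * X 1 + C k3 * X 2) * g) :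
    ∃ Q : P, Q ≠ 0 ∧ D2 A Q = -(C k1 * X 0 + C k2 * X 1 + C k3 * X 2) * Q := by
  have hs0 : ∀ i, (![-1, 1, 1] : Fin 3 → ℝ) i * (![-1, 1, 1] : Fin 3 → ℝ) i = 1 := by
    intro i; fin_cases i <;> simp
  have hs1 : ∀ i, (![1, -1, 1] : Fin 3 → ℝ) i * (![1, -1, 1] : Fin 3 → ℝ) i = 1 := by
    intro i; fin_cases i <;> simp
  have hs2 : ∀ i, (![1, 1, -1] : Fin 3 → ℝ) i * (![1, 1, -1] : Fin 3 → ℝ) i = 1 := by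
    intro i; fin_cases i <;> simp
  refine ⟨rho ![-1, 1, 1] g * rho ![1, -1, 1] g * rho ![1, 1, -1] g,
    mul_ne_zero (mul_ne_zero (rho_ne_zero _ hs0 hg) (rho_ne_zero _ hs1 hg))
      (rho_ne_zero _ hs2 hg), ?_⟩
  have e0 := D2_rho A _ hs0 g
  have e1 := D2_rho A _ hs1 g
  have e2 := D2_rho A _ hs2 g
  rw [h] at e0 e1 e2
  simp [rho_X, rho_C] at e0 e1 e2
  rw [Derivation.leibniz, Derivation.leibniz, e0, e1, e2]
  simp only [smul_eq_mul]
  ring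

lemma order_one (D2 D1 : Derivation ℝ P P) (K1 K0 Q f0 f1 g0 g1 : P)
    (hQ : D2 Q = -K1 * Q)
    (hf0 : D2 f0 = K1 * f0) (hf1 : D2 f1 + D1 f0 = K1 * f1 + K0 * f0)
    (hg0 : D2 g0 = K1 * g0) (hg1 : D2 g1 + D1 g0 = K1 * g1 + K0 * g0) :
    D2 (Q ^ 2 * (f1 * g0 - f0 * g1)) =
      -((Q * g0) * D1 (Q * f0) - (Q * f0) * D1 (Q * g0)) := by
  simp only [Derivation.leibniz, Derivation.leibniz_pow, map_sub, smul_eq_mul, nsmul_eq_mul]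
  push_cast
  linear_combination (2 * Q * (f1 * g0 - f0 * g1)) * hQ + Q ^ 2 * g0 * hf1 - Q ^ 2 * g1 * hf0
    - Q ^ 2 * f0 * hg1 + Q ^ 2 * f1 * hg0

lemma order_two (D2 D1 D0 : Derivation ℝ P P) (K1 K0 Q f0 f1 f2 g0 g1 g2 : P)
    (hQ : D2 Q = -K1 * Q)
    (hf0 : D2 f0 = K1 * f0) (hf1 : D2 f1 + D1 f0 = K1 * f1 + K0 * f0)
    (hf2 : D2 f2 + D1 f1 + D0 f0 = K1 * f2 + K0 * f1)
    (hg0 : D2 g0 = K1 * g0) (hg1 : D2 g1 + D1 g0 = K1 * g1 + K0 * g0)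
    (hg2 : D2 g2 + D1 g1 + D0 g0 = K1 * g2 + K0 * g1) :
    D2 (Q ^ 3 * (f2 * g0 ^ 2 - f1 * g1 * g0 - f0 * g2 * g0 + f0 * g1 ^ 2)) =
      -((Q * g0) * D1 (Q ^ 2 * (f1 * g0 - f0 * g1))
        - 2 * (Q ^ 2 * (f1 * g0 - f0 * g1)) * D1 (Q * g0)
        + (Q * g0) * ((Q * g0) * D0 (Q * f0) - (Q * f0) * D0 (Q * g0))) := by
  simp only [Derivation.leibniz, Derivation.leibniz_pow, map_sub, map_add, smul_eq_mul,
    nsmul_eq_mul]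
  push_cast
  linear_combination (3 * Q ^ 2 * (f2 * g0 ^ 2 - f1 * g1 * g0 - f0 * g2 * g0 + f0 * g1 ^ 2)) * hQ
    + Q ^ 3 * g0 ^ 2 * hf2 - Q ^ 3 * g1 * g0 * hf1 + Q ^ 3 * (2 * f0 * g1 - f1 * g0) * hg1
    - Q ^ 3 * f0 * g0 * hg2 + Q ^ 3 * (g1 ^ 2 - g2 * g0) * hf0
    + Q ^ 3 * (2 * f2 * g0 - f1 * g1 - f0 * g2) * hg0

lemma D1_bet (A c σ : ℝ) (b : B) : D1 c σ (bet A b) =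
    bet A (-2 * C σ * X 0 * pderiv 0 b - 2 * X 1 * pderiv 1 b)
     + bet A (2 * C A * (C σ - 1) * pderiv 0 b) * X 1 ^ 2
     + X 0 * X 2 * bet A (2 * C c * pderiv 0 b) := by
  rw [deriv_bet]
  simp only [Derivation.leibniz, Derivation.leibniz_pow, map_sub, map_add, smul_eq_mul,
    nsmul_eq_mul, derivation_C, D1_X0, D1_X1, D1_X2, map_mul, bet_X0, bet_X1, bet_C, map_neg,
    map_ofNat, map_one]
  push_cast
  ring

lemma D0_bet (A r : ℝ) (b : B) : D0 r (bet A b) =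
    X 1 * bet A (2 * C r * (C A * pderiv 0 b + pderiv 1 b)) := by
  rw [deriv_bet]
  simp only [Derivation.leibniz, Derivation.leibniz_pow, map_sub, map_add, smul_eq_mul,
    nsmul_eq_mul, derivation_C, D0_X0, D0_X1, D0_X2, map_mul, bet_X0, bet_X1, bet_C, map_neg,
    map_ofNat, map_one]
  push_cast
  ring

lemma euler_wronskian (a b du : B)
    (hdu : du = b * pderiv 0 a - a * pderiv 0 b)
    (h : X 0 * du + X 1 * (b * pderiv 1 a - a * pderiv 1 b) = 0) :
    b * (X 0 * pderiv 0 du + X 1 * pderiv 1 du) =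
      2 * (X 0 * pderiv 0 b + X 1 * pderiv 1 b) * du - b * du := by
  have h2 := congrArg (pderiv (0 : Fin 2)) h
  subst hdu
  have hab := pderiv_comm' 0 1 a
  have hbb := pderiv_comm' 0 1 b
  simp only [map_add, map_sub, map_zero, pderiv_mul, pderiv_X, Pi.single_apply] at h2 ⊢
  simp at h2 ⊢
  rw [hab, hbb] at h2
  linear_combination b * h2 - 2 * pderiv 0 b * h

theorem lead (A c σ r : ℝ) (hA : 0 < A) (hc : 0 < c) (hσ : 0 < σ) (hr : 0 < r)
    (k1 k2 k3 : ℝ) (K0 f0 f1 f2 g0 g1 g2 : P) (hg : g0 ≠ 0)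
    (hf0 : D2 A f0 = (C k1 * X 0 + C k2 * X 1 + C k3 * X 2) * f0)
    (hf1 : D2 A f1 + D1 c σ f0 = (C k1 * X 0 + C k2 * X 1 + C k3 * X 2) * f1 + K0 * f0)
    (hf2 : D2 A f2 + D1 c σ f1 + D0 r f0 =
      (C k1 * X 0 + C k2 * X 1 + C k3 * X 2) * f2 + K0 * f1)
    (hg0 : D2 A g0 = (C k1 * X 0 + C k2 * X 1 + C k3 * X 2) * g0)
    (hg1 : D2 A g1 + D1 c σ g0 = (C k1 * X 0 + C k2 * X 1 + C k3 * X 2) * g1 + K0 * g0)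
    (hg2 : D2 A g2 + D1 c σ g1 + D0 r g0 =
      (C k1 * X 0 + C k2 * X 1 + C k3 * X 2) * g2 + K0 * g1) :
    ∃ t : ℝ, f0 = C t * g0 := by
  obtain ⟨Q, hQ0, hQ⟩ := exists_Q A k1 k2 k3 g0 hg hg0
  obtain ⟨a, ha⟩ := ker_D2 A hA.ne' (Q * f0) (by
    rw [Derivation.leibniz, hQ, hf0]; simp only [smul_eq_mul]; ring)
  obtain ⟨b, hb⟩ := ker_D2 A hA.ne' (Q * g0) (by
    rw [Derivation.leibniz, hQ, hg0]; simp only [smul_eq_mul]; ring)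
  have hb0 : b ≠ 0 := by
    rintro rfl
    rw [map_zero] at hb
    exact mul_ne_zero hQ0 hg hb
  have o1 := order_one _ _ _ _ Q f0 f1 g0 g1 hQ hf0 hf1 hg0 hg1
  have o2 := order_two _ _ _ _ _ Q f0 f1 f2 g0 g1 g2 hQ hf0 hf1 hf2 hg0 hg1 hg2
  rw [ha, hb] at o1 o2
  generalize Q ^ 2 * (f1 * g0 - f0 * g1) = E1 at o1 o2
  obtain ⟨du, hdu⟩ : ∃ du, du = b * pderiv 0 a - a * pderiv 0 b := ⟨_, rfl⟩
  obtain ⟨dv, hdv⟩ : ∃ dv, dv = b * pderiv 1 a - a * pderiv 1 b := ⟨_, rfl⟩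
  suffices hfin : du = 0 ∧ dv = 0 by
    obtain ⟨t, ht⟩ := wronskian a b hb0 (by
      intro i
      fin_cases i
      · exact hdu.symm.trans hfin.1
      · exact hdv.symm.trans hfin.2)
    refine ⟨t, ?_⟩
    apply mul_left_cancel₀ hQ0
    rw [ha, ht, map_mul, bet_C, ← hb]; ring
  have o1' : D2 A E1 = bet A (2 * (C σ * X 0 * du + X 1 * dv))
      + bet A (-2 * C A * (C σ - 1) * du) * X 1 ^ 2 + X 0 * X 2 * bet A (-2 * C c * du) := by
    rw [o1, D1_bet, D1_bet, hdu, hdv]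
    simp only [map_sub, map_add, map_mul, map_neg, map_ofNat, map_one]
    ring
  obtain ⟨x1, x2⟩ := exact_one A hA.ne' E1 _ _ _ o1'
  have x1' : C σ * X 0 * du + X 1 * dv = 0 := by simpa using x1
  by_cases hσ1 : σ = 1
  · subst hσ1
    simp only [C_1, one_mul] at x1'
    obtain ⟨G, hG⟩ := ker_D2 A hA.ne' (E1 - X 1 * bet A (2 * C c * du)) (by
      rw [map_sub, o1', Derivation.leibniz, D2_bet, D2_X1, x1, x2]
      simp; ring)
    have hE1 : E1 = X 1 * bet A (2 * C c * du) + bet A G := by rw [← hG]; ring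
    have hew := euler_wronskian a b du hdu (by rw [← hdv]; exact x1')
    have hy := exact_y A hA.ne' _ ![
      Polynomial.C (2 * b * (X 0 * pderiv 0 G + X 1 * pderiv 1 G)
        - 4 * G * (X 0 * pderiv 0 b + X 1 * pderiv 1 b)), 0,
      Polynomial.C (-(b * (-2 * C c * du - 4 * C c * (X 0 * pderiv 0 du + X 1 * pderiv 1 du))
        + 8 * C c * du * (X 0 * pderiv 0 b + X 1 * pderiv 1 b)
        + b * (2 * C r * (C A * du + dv)))), 0, 0,
      Polynomial.C (-(2 * C c * b * pderiv 0 G - 4 * C c * G * pderiv 0 b)), 0,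
      Polynomial.C (-(4 * C c * C c * b * pderiv 0 du - 8 * C c * C c * du * pderiv 0 b))]
      _ rfl (by
        rw [o2, hE1]
        simp only [map_add, Derivation.leibniz, D1_X1, D1_bet, D0_bet, comb, Matrix.cons_val, phi_C,
          hdv, pderiv_mul]
        have p2 : ∀ i : Fin 2, pderiv i (2 : B) = 0 := fun i => by
          rw [← map_ofNat (C : ℝ →+* B) 2, pderiv_C]
        simp only [p2, pderiv_C, map_sub, map_add, map_mul, map_neg, map_ofNat, map_one, bet_C,
          smul_eq_mul, map_zero, C_1]
        rw [hdu]
        simp only [map_sub, map_add, map_mul, map_neg]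
        ring)
    have hlin : C (c + r * A) * du + C r * dv = 0 := by
      have : b * (C (c + r * A) * du + C r * dv) = 0 := by
        have h2 : (2 : B) * (b * (C (c + r * A) * du + C r * dv)) = 0 := by
          rw [C_add, C_mul]
          linear_combination -hy + 4 * C c * hew
        simpa using h2
      exact (mul_eq_zero.mp this).resolve_left hb0
    have hdet : (C (c + r * A) * X 1 - C r * X 0) * du = 0 := by
      linear_combination X 1 * hlin - C r * x1'
    have hne : (C (c + r * A) * X 1 - C r * X 0 : B) ≠ 0 := by
      intro h0
      have := congrArg (eval ![0, 1]) h0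
      simp at this
      have h3 : 0 < r * A := mul_pos hr hA
      linarith
    have hdu0 := (mul_eq_zero.mp hdet).resolve_left hne
    refine ⟨hdu0, ?_⟩
    rw [hdu0, mul_zero, zero_add] at hlin
    exact (mul_eq_zero.mp hlin).resolve_left (by rw [C_eq_zero]; exact hr.ne')
  · have hdu0 : du = 0 := by
      have h1 : (-2 * C A * (C σ - 1) : B) ≠ 0 := by
        have : (-2 * C A * (C σ - 1) : B) = C (-2 * A * (σ - 1)) := by
          have e2 : (C 2 : B) = 2 := map_ofNat C 2
          simp [e2]
        rw [this, Ne, C_eq_zero]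
        have : σ - 1 ≠ 0 := sub_ne_zero.mpr hσ1
        have := hA.ne'
        positivity
      exact (mul_eq_zero.mp x2).resolve_left h1
    refine ⟨hdu0, ?_⟩
    rw [hdu0, mul_zero, zero_add] at x1'
    exact (mul_eq_zero.mp x1').resolve_left (X_ne_zero 1)


noncomputable def comp (j : ℤ) : MvPolynomial (Fin 3) ℝ →ₗ[ℝ] MvPolynomial (Fin 3) ℝ :=
  if 0 ≤ j then homogeneousComponent j.toNat else 0

theorem coeff_comp (j : ℤ) (f : MvPolynomial (Fin 3) ℝ) (d : Fin 3 →₀ ℕ) :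
    coeff d (comp j f) = if (d.degree : ℤ) = j then coeff d f else 0 := by
  unfold comp
  split_ifs with h1 h2 h2
  · rw [coeff_homogeneousComponent, if_pos (by omega)]
  · rw [coeff_homogeneousComponent, if_neg (by omega)]
  · omega
  · simp

theorem comp_X_mul (j : ℤ) (i : Fin 3) (f : MvPolynomial (Fin 3) ℝ) :
    comp j (X i * f) = X i * comp (j - 1) f := by
  ext d
  rw [coeff_comp, coeff_X_mul', coeff_X_mul', coeff_comp]
  by_cases hi : i ∈ d.support
  · have hd : d = (d - Finsupp.single i 1) + Finsupp.single i 1 := by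
      rw [tsub_add_cancel_of_le]
      rw [Finsupp.single_le_iff]
      have := Finsupp.mem_support_iff.1 hi
      omega
    have hdeg : d.degree = (d - Finsupp.single i 1).degree + 1 := by
      conv_lhs => rw [hd]
      rw [map_add, Finsupp.degree_single]
    rw [if_pos hi, if_pos hi]
    by_cases h : (d.degree : ℤ) = j
    · rw [if_pos h, if_pos (by omega)]
    · rw [if_neg h, if_neg (by omega)]
  · simp [hi]

theorem comp_C_mul (j : ℤ) (t : ℝ) (f : MvPolynomial (Fin 3) ℝ) :
    comp j (C t * f) = C t * comp j f := by
  rw [C_mul', C_mul', map_smul]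

theorem comp_pderiv (j : ℤ) (i : Fin 3) (f : MvPolynomial (Fin 3) ℝ) :
    comp j (pderiv i f) = pderiv i (comp (j + 1) f) := by
  ext d
  rw [coeff_comp, coeff_pderiv, coeff_pderiv, coeff_comp, map_add, Finsupp.degree_single]
  by_cases h : (d.degree : ℤ) = j
  · rw [if_pos h, if_pos (by push_cast; omega)]
  · rw [if_neg h, if_neg (by push_cast; omega), zero_mul]

theorem comp_D2 (A : ℝ) (j : ℤ) (f : MvPolynomial (Fin 3) ℝ) :
    comp j (D2 A f) = D2 A (comp (j - 1) f) := by
  rw [D2_apply, D2_apply]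
  simp only [map_add, mul_assoc, neg_mul, map_neg, comp_C_mul, comp_X_mul, comp_pderiv]
  rw [show j - 1 - 1 + 1 = j - 1 by ring]

theorem comp_D1 (c σ : ℝ) (j : ℤ) (f : MvPolynomial (Fin 3) ℝ) :
    comp j (D1 c σ f) = D1 c σ (comp j f) := by
  rw [D1_apply, D1_apply]
  simp only [map_add, map_sub, sub_mul, mul_assoc, neg_mul, map_neg, comp_C_mul, comp_X_mul,
    comp_pderiv]
  rw [show j - 1 + 1 = j by ring]

theorem comp_D0 (r : ℝ) (j : ℤ) (f : MvPolynomial (Fin 3) ℝ) :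
    comp j (D0 r f) = D0 r (comp (j + 1) f) := by
  rw [D0_apply, D0_apply]
  simp only [comp_C_mul, comp_pderiv]

theorem comp_eq_zero (j : ℤ) (f : MvPolynomial (Fin 3) ℝ) (h : (f.totalDegree : ℤ) < j) :
    comp j f = 0 := by
  ext d
  rw [coeff_comp]
  split_ifs with hd
  · by_contra hne
    have := le_totalDegree (p := f) (mem_support_iff.2 hne)
    have h2 : d.degree = d.sum fun _ e => e := by
      simp [Finsupp.degree_eq_sum, Finsupp.sum_fintype]
    omega
  · simp

theorem totalDegree_le_of_comp (n : ℕ) (f : MvPolynomial (Fin 3) ℝ)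
    (h : ∀ j : ℤ, n < j → comp j f = 0) : f.totalDegree ≤ n := by
  refine Finset.sup_le fun d hd => ?_
  by_contra hlt
  have h2 : d.degree = d.sum fun _ e => e := by
    simp [Finsupp.degree_eq_sum, Finsupp.sum_fintype]
  have h3 := congrArg (coeff d) (h d.degree (by omega))
  rw [coeff_comp, if_pos rfl, coeff_zero] at h3
  exact mem_support_iff.1 hd h3

theorem comp_top_ne_zero (f : MvPolynomial (Fin 3) ℝ) (hf : f ≠ 0) :
    comp f.totalDegree f ≠ 0 := by
  intro h
  obtain ⟨d, hd, hs⟩ := Finset.exists_mem_eq_sup f.support (support_nonempty.2 hf)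
    (fun s => s.sum fun _ e => e)
  have h2 : d.degree = d.sum fun _ e => e := by
    simp [Finsupp.degree_eq_sum, Finsupp.sum_fintype]
  have h3 := congrArg (coeff d) h
  have h4 : f.totalDegree = d.degree := by rw [h2]; exact hs
  rw [coeff_comp, if_pos (by rw [h4]), coeff_zero] at h3
  exact mem_support_iff.1 hd h3

theorem comp_index (i j : ℤ) (f g : MvPolynomial (Fin 3) ℝ) (t : ℝ) (hf : comp i f ≠ 0)
    (h : comp i f = C t * comp j g) : i = j := by
  obtain ⟨d, hd⟩ := ne_zero_iff.1 hf
  have h1 : (d.degree : ℤ) = i := by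
    by_contra hne
    rw [coeff_comp, if_neg hne] at hd
    exact hd rfl
  rw [h, coeff_C_mul, coeff_comp] at hd
  by_contra hne
  rw [if_neg (by omega)] at hd
  simp at hd

theorem degree_fin3 (d : Fin 3 →₀ ℕ) : d.degree = d 0 + d 1 + d 2 := by
  rw [Finsupp.degree_eq_sum, Fin.sum_univ_three]

theorem linear_form (K : MvPolynomial (Fin 3) ℝ) (hK : ∀ j : ℤ, 1 < j → comp j K = 0) :
    ∃ k0 k1 k2 k3 : ℝ, K = C k0 + (C k1 * X 0 + C k2 * X 1 + C k3 * X 2) := by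
  refine ⟨coeff 0 K, coeff (Finsupp.single 0 1) K, coeff (Finsupp.single 1 1) K,
    coeff (Finsupp.single 2 1) K, ?_⟩
  ext d
  simp only [coeff_add, coeff_C_mul, coeff_C, coeff_X]
  have hdeg := degree_fin3 d
  by_cases hd : 1 < d.degree
  · have h3 := congrArg (coeff d) (hK d.degree (by exact_mod_cast hd))
    rw [coeff_comp, if_pos rfl, coeff_zero] at h3
    rw [h3, if_neg, if_neg, if_neg, if_neg]
    · simp
    all_goals
      rintro rfl
      simp at hd
  · have hcases : d = 0 ∨ d = Finsupp.single 0 1 ∨ d = Finsupp.single 1 1 ∨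
        d = Finsupp.single 2 1 := by
      have : (d 0 = 0 ∧ d 1 = 0 ∧ d 2 = 0) ∨ (d 0 = 1 ∧ d 1 = 0 ∧ d 2 = 0) ∨
        (d 0 = 0 ∧ d 1 = 1 ∧ d 2 = 0) ∨ (d 0 = 0 ∧ d 1 = 0 ∧ d 2 = 1) := by omega
      rcases this with ⟨a, b, c⟩ | ⟨a, b, c⟩ | ⟨a, b, c⟩ | ⟨a, b, c⟩
      · left
        ext i; fin_cases i <;> simp [a, b, c]
      · right; left
        ext i; fin_cases i <;> simp [a, b, c]
      · right; right; left
        ext i; fin_cases i <;> simp [a, b, c]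
      · right; right; right
        ext i; fin_cases i <;> simp [a, b, c]
    have n01 : ∀ i j : Fin 3, (Finsupp.single i 1 : Fin 3 →₀ ℕ) = Finsupp.single j 1 ↔ i = j := by
      intro i j
      rw [Finsupp.single_left_inj one_ne_zero]
    rcases hcases with rfl | rfl | rfl | rfl <;> simp [n01, eq_comm]

theorem comp_gd (A c σ r : ℝ) (f : MvPolynomial (Fin 3) ℝ) (j : ℤ) :
    comp j (gdDeriv A c σ r f) =
      D2 A (comp (j - 1) f) + D1 c σ (comp j f) + D0 r (comp (j + 1) f) := by
  rw [gdDeriv_eq, map_add, map_add, comp_D2, comp_D1, comp_D0]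

theorem comp_K (k0 k1 k2 k3 : ℝ) (f : MvPolynomial (Fin 3) ℝ) (j : ℤ) :
    comp j ((C k0 + (C k1 * X 0 + C k2 * X 1 + C k3 * X 2)) * f) =
      (C k1 * X 0 + C k2 * X 1 + C k3 * X 2) * comp (j - 1) f + C k0 * comp j f := by
  simp only [add_mul, mul_assoc, map_add, comp_C_mul, comp_X_mul]
  ring

theorem levels (A c σ r k0 k1 k2 k3 : ℝ) (f : MvPolynomial (Fin 3) ℝ)
    (h : gdDeriv A c σ r f = (C k0 + (C k1 * X 0 + C k2 * X 1 + C k3 * X 2)) * f)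
    (n : ℤ) (hn : n = f.totalDegree) :
    D2 A (comp n f) = (C k1 * X 0 + C k2 * X 1 + C k3 * X 2) * comp n f ∧
    D2 A (comp (n - 1) f) + D1 c σ (comp n f) =
      (C k1 * X 0 + C k2 * X 1 + C k3 * X 2) * comp (n - 1) f + C k0 * comp n f ∧
    D2 A (comp (n - 2) f) + D1 c σ (comp (n - 1) f) + D0 r (comp n f) =
      (C k1 * X 0 + C k2 * X 1 + C k3 * X 2) * comp (n - 2) f + C k0 * comp (n - 1) f := by
  have key : ∀ j : ℤ, D2 A (comp (j - 1) f) + D1 c σ (comp j f) + D0 r (comp (j + 1) f) =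
      (C k1 * X 0 + C k2 * X 1 + C k3 * X 2) * comp (j - 1) f + C k0 * comp j f := by
    intro j
    rw [← comp_gd, h, comp_K]
  have z1 : comp (n + 1) f = 0 := comp_eq_zero _ _ (by omega)
  have z2 : comp (n + 1 + 1) f = 0 := comp_eq_zero _ _ (by omega)
  refine ⟨?_, ?_, ?_⟩
  · have := key (n + 1)
    rw [z2, z1, add_sub_cancel_right] at this
    simpa using this
  · have := key n
    rw [z1] at this
    simpa using this
  · have := key (n - 1)
    rw [sub_add_cancel, show n - 1 - 1 = n - 2 by ring] at this
    exact this

theorem lead_pair (A c σ r : ℝ) (hA : 0 < A) (hc : 0 < c) (hσ : 0 < σ) (hr : 0 < r)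
    (k0 k1 k2 k3 : ℝ) (f g : MvPolynomial (Fin 3) ℝ) (hf : f ≠ 0) (hg : g ≠ 0)
    (h : gdDeriv A c σ r f = (C k0 + (C k1 * X 0 + C k2 * X 1 + C k3 * X 2)) * f)
    (h' : gdDeriv A c σ r g = (C k0 + (C k1 * X 0 + C k2 * X 1 + C k3 * X 2)) * g) :
    f.totalDegree = g.totalDegree ∧
      ∃ t : ℝ, comp f.totalDegree f = C t * comp g.totalDegree g := by
  obtain ⟨a1, a2, a3⟩ := levels A c σ r k0 k1 k2 k3 f h _ rfl
  obtain ⟨b1, b2, b3⟩ := levels A c σ r k0 k1 k2 k3 g h' _ rfl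
  obtain ⟨t, ht⟩ := lead A c σ r hA hc hσ hr k1 k2 k3 (C k0) _ _ _ _ _ _
    (comp_top_ne_zero g hg) a1 a2 a3 b1 b2 b3
  refine ⟨?_, t, ht⟩
  have := comp_index _ _ _ _ _ (comp_top_ne_zero f hf) ht
  exact_mod_cast this

theorem proportional (A c σ r : ℝ) (hA : 0 < A) (hc : 0 < c) (hσ : 0 < σ) (hr : 0 < r)
    (k0 k1 k2 k3 : ℝ) (f g : MvPolynomial (Fin 3) ℝ) (hf : f ≠ 0) (hg : g ≠ 0)
    (h : gdDeriv A c σ r f = (C k0 + (C k1 * X 0 + C k2 * X 1 + C k3 * X 2)) * f)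
    (h' : gdDeriv A c σ r g = (C k0 + (C k1 * X 0 + C k2 * X 1 + C k3 * X 2)) * g) :
    ∃ t : ℝ, f = C t * g := by
  obtain ⟨hd, t, ht⟩ := lead_pair A c σ r hA hc hσ hr k0 k1 k2 k3 f g hf hg h h'
  refine ⟨t, ?_⟩
  by_contra hne
  have hne' : f - C t * g ≠ 0 := sub_ne_zero.2 hne
  have hh : gdDeriv A c σ r (f - C t * g) =
      (C k0 + (C k1 * X 0 + C k2 * X 1 + C k3 * X 2)) * (f - C t * g) := by
    have e : gdDeriv A c σ r (f - C t * g) = gdDeriv A c σ r f - C t * gdDeriv A c σ r g := by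
      simp only [gdDeriv, map_sub, pderiv_C_mul, smul_eq_C_mul]
      ring
    rw [e, h, h']
    ring
  obtain ⟨hd2, -⟩ := lead_pair A c σ r hA hc hσ hr k0 k1 k2 k3 _ g hne' hg hh h'
  apply comp_top_ne_zero _ hne'
  rw [hd2, map_sub, comp_C_mul, ← ht, hd, sub_self]

theorem cofactor (A c σ r : ℝ) (f K : MvPolynomial (Fin 3) ℝ) (hf : f ≠ 0)
    (h : gdDeriv A c σ r f = f * K) :
    ∃ k0 k1 k2 k3 : ℝ, K = C k0 + (C k1 * X 0 + C k2 * X 1 + C k3 * X 2) := by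
  apply linear_form
  by_cases hK : K = 0
  · subst hK
    intro j _
    simp
  have h1 : (gdDeriv A c σ r f).totalDegree ≤ f.totalDegree + 1 := by
    apply totalDegree_le_of_comp
    intro j hj
    push_cast at hj
    rw [comp_gd, comp_eq_zero _ f (by omega), comp_eq_zero _ f (by omega),
      comp_eq_zero _ f (by omega)]
    simp
  rw [h, totalDegree_mul_of_isDomain hf hK] at h1
  intro j hj
  exact comp_eq_zero _ _ (by omega)

theorem main (A c σ r : ℝ) (hA : 0 < A) (hc : 0 < c) (hσ : 0 < σ) (hr : 0 < r)
    (f g : MvPolynomial (Fin 3) ℝ) (hf : f ≠ 0) (hg : g ≠ 0) (hcop : IsRelPrime f g)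
    (hfi : gdDeriv A c σ r f * g = f * gdDeriv A c σ r g) :
    (∃ c : ℝ, f = C c) ∧ (∃ c : ℝ, g = C c) := by
  obtain ⟨K, hK⟩ : f ∣ gdDeriv A c σ r f :=
    hcop.dvd_of_dvd_mul_right (Dvd.intro _ hfi.symm)
  have hK' : gdDeriv A c σ r g = K * g := by
    apply mul_left_cancel₀ hf
    rw [← hfi, hK]
    ring
  obtain ⟨k0, k1, k2, k3, rfl⟩ := cofactor A c σ r f K hf hK
  rw [mul_comm] at hK
  obtain ⟨t, ht⟩ := proportional A c σ r hA hc hσ hr k0 k1 k2 k3 f g hf hg hK hK'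
  have hu : IsUnit g := hcop (ht ▸ Dvd.intro_left _ rfl) dvd_rfl
  obtain ⟨s, -, hs⟩ := isUnit_iff_eq_C_of_isReduced.1 hu
  exact ⟨⟨t * s, by rw [ht, hs, C_mul]⟩, s, hs⟩

end GD

/-- For positive parameters, the Glukhovsky–Dolzhansky system has no
nonconstant rational first integral. -/
theorem gd_no_rational_first_integral
    (A C σ Ra : ℝ) (hA : 0 < A) (hC : 0 < C) (hσ : 0 < σ) (hRa : 0 < Ra)
    (f g : MvPolynomial (Fin 3) ℝ) (hf : f ≠ 0) (hg : g ≠ 0)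
    (hcop : IsRelPrime f g)
    (hfi : gdDeriv A C σ Ra f * g = f * gdDeriv A C σ Ra g) :
    (∃ c : ℝ, f = MvPolynomial.C c) ∧ (∃ c : ℝ, g = MvPolynomial.C c) := by
  exact GD.main A C σ Ra hA hC hσ hRa f g hf hg hcop hfi
end

section
/- Let A, C, σ, Ra be strictly positive real parameters. Then the Glukhovsky–Dolzhansky system has no exponential factors: if g, h ∈ ℝ[x,y,z] are coprime polynomials with h ≠ 0, and L ∈ ℝ[x,y,z] is a polynomial of degree at most 1 such that h·X(g) − g·X(h) = L·h² (which expresses that exp(g/h) satisfies X(exp(g/h)) = L·exp(g/h)), then g and h are both constant polynomials, so exp(g/h) is a constant function. -/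
open MvPolynomial

namespace GD

abbrev M := MvPolynomial (Fin 3) ℝ
abbrev BY := Polynomial B

/-- The quadratic (Euler top) part of the vector field. -/
noncomputable def D (A : ℝ) : Derivation ℝ M M :=
  (C A * X 1 * X 2 : M) • pderiv 0 + (-(X 0 * X 2) : M) • pderiv 1 + (X 0 * X 1 : M) • pderiv 2

noncomputable def I1 (A : ℝ) : M := X 0 ^ 2 + C A * X 1 ^ 2
noncomputable def I2 : M := X 1 ^ 2 + X 2 ^ 2
noncomputable def iota (A : ℝ) : B →ₐ[ℝ] M := aeval ![I1 A, I2]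
noncomputable def psi (A : ℝ) : BY →+* M := Polynomial.eval₂RingHom (iota A).toRingHom (X 1)
noncomputable def rep (A : ℝ) (α β γ δ : BY) : M :=
  psi A α + X 0 * psi A β + X 2 * psi A γ + X 0 * X 2 * psi A δ

noncomputable def ca (A : ℝ) : BY := Polynomial.C (C A)
noncomputable def i1 : BY := Polynomial.C (X 0)
noncomputable def i2 : BY := Polynomial.C (X 1)

noncomputable def T1 (A : ℝ) (δ : BY) : BY :=
  (2 * ca A * Polynomial.X ^ 3 - (i1 + ca A * i2) * Polynomial.X) * δ
   + (i1 - ca A * Polynomial.X ^ 2) * (i2 - Polynomial.X ^ 2) * Polynomial.derivative δ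
noncomputable def T2 (γ : BY) : BY :=
  Polynomial.X * γ + (Polynomial.X ^ 2 - i2) * Polynomial.derivative γ
noncomputable def T3 (A : ℝ) (β : BY) : BY :=
  ca A * Polynomial.X * β + (ca A * Polynomial.X ^ 2 - i1) * Polynomial.derivative β

lemma D_apply (A : ℝ) (f : M) : D A f = C A * X 1 * X 2 * pderiv 0 f
    + -(X 0 * X 2) * pderiv 1 f + X 0 * X 1 * pderiv 2 f := by
  simp [D]

lemma psi_C (A : ℝ) (b : B) : psi A (Polynomial.C b) = iota A b := by simp [psi]
lemma psi_X (A : ℝ) : psi A Polynomial.X = X 1 := by simp [psi]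
lemma psi_ca (A a : ℝ) : psi A (ca a) = C a := by
  simp [psi, ca, iota, MvPolynomial.algebraMap_eq]
lemma psi_i1 (A : ℝ) : psi A i1 = X 0 ^ 2 + C A * X 1 ^ 2 := by simp [psi, i1, iota, I1]
lemma psi_i2 (A : ℝ) : psi A i2 = X 1 ^ 2 + X 2 ^ 2 := by simp [psi, i2, iota, I2]

lemma der_iota (A : ℝ) (d : Derivation ℝ M M) (b : B) :
    d (iota A b) = iota A (pderiv 0 b) * d (I1 A) + iota A (pderiv 1 b) * d I2 := by
  induction b using MvPolynomial.induction_on with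
  | C a => simp [iota]
  | add p q hp hq => simp only [map_add, hp, hq]; ring
  | mul_X p i hp =>
    have h0 : iota A (X 0) = I1 A := by simp [iota]
    have h1 : iota A (X 1) = I2 := by simp [iota]
    fin_cases i
    · simp only [Fin.zero_eta, map_mul, h0, Derivation.leibniz, hp, pderiv_X_self, smul_eq_mul,
        pderiv_X_of_ne (show (0 : Fin 2) ≠ 1 by decide), map_add, mul_zero, mul_one, zero_add]
      ring
    · simp only [Fin.mk_one, map_mul, h1, Derivation.leibniz, hp, pderiv_X_self, smul_eq_mul,
        pderiv_X_of_ne (show (1 : Fin 2) ≠ 0 by decide), map_add, mul_zero, mul_one, zero_add]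
      ring

lemma der_psi (A : ℝ) (d : Derivation ℝ M M) (h1 : d (I1 A) = 0) (h2 : d I2 = 0) (p : BY) :
    d (psi A p) = psi A (Polynomial.derivative p) * d (X 1) := by
  induction p using Polynomial.induction_on' with
  | add p q hp hq => simp only [map_add, hp, hq]; ring
  | monomial n a =>
    rw [← Polynomial.C_mul_X_pow_eq_monomial]
    simp only [map_mul, psi_C, map_pow, psi_X, Derivation.leibniz, der_iota, h1, h2,
      Polynomial.derivative_C_mul_X_pow, Derivation.leibniz_pow, smul_eq_mul, nsmul_eq_mul]
    simp only [map_natCast]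
    ring

lemma D_X0 (A : ℝ) : D A (X 0) = C A * X 1 * X 2 := by
  rw [D_apply]; simp [pderiv_X]
lemma D_X1 (A : ℝ) : D A (X 1) = -(X 0 * X 2) := by
  rw [D_apply]; simp [pderiv_X]
lemma D_X2 (A : ℝ) : D A (X 2) = X 0 * X 1 := by
  rw [D_apply]; simp [pderiv_X]
lemma D_C (A a : ℝ) : D A (C a) = 0 := by
  rw [D_apply]; simp
lemma D_I1 (A : ℝ) : D A (I1 A) = 0 := by
  simp only [I1, map_add, Derivation.leibniz, Derivation.leibniz_pow, D_X0, D_X1, D_C, smul_eq_mul,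
    nsmul_eq_mul]
  push_cast; ring
lemma D_I2 (A : ℝ) : D A I2 = 0 := by
  simp only [I2, map_add, Derivation.leibniz_pow, D_X2, D_X1, smul_eq_mul, nsmul_eq_mul]
  push_cast; ring
lemma D_psi (A : ℝ) (p : BY) :
    D A (psi A p) = - (X 0 * X 2) * psi A (Polynomial.derivative p) := by
  rw [der_psi A _ (D_I1 A) (D_I2 A), D_X1]; ring

lemma D_iota (A : ℝ) (b : B) : D A (iota A b) = 0 := by
  rw [der_iota, D_I1, D_I2]; ring

lemma D_rep (A : ℝ) (α β γ δ : BY) : D A (rep A α β γ δ) =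
    rep A (-T1 A δ) (T2 γ) (T3 A β) (-Polynomial.derivative α) := by
  simp only [rep, T1, T2, T3, map_add, map_sub, map_mul, map_neg, map_pow, psi_X, psi_ca, psi_i1,
    psi_i2, D_psi, Derivation.leibniz, D_X0, D_X1, D_X2, smul_eq_mul, map_ofNat]
  ring

lemma X0_rep (A : ℝ) (α β γ δ : BY) : X 0 * rep A α β γ δ =
    rep A ((i1 - ca A * Polynomial.X ^ 2) * β) α ((i1 - ca A * Polynomial.X ^ 2) * δ) γ := by
  simp only [rep, map_sub, map_mul, map_pow, psi_X, psi_ca, psi_i1]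
  ring
lemma X1_rep (A : ℝ) (α β γ δ : BY) : X 1 * rep A α β γ δ =
    rep A (Polynomial.X * α) (Polynomial.X * β) (Polynomial.X * γ) (Polynomial.X * δ) := by
  simp only [rep, map_mul, psi_X]
  ring
lemma X2_rep (A : ℝ) (α β γ δ : BY) : X 2 * rep A α β γ δ =
    rep A ((i2 - Polynomial.X ^ 2) * γ) ((i2 - Polynomial.X ^ 2) * δ) α β := by
  simp only [rep, map_sub, map_mul, map_pow, psi_X, psi_i2]
  ring
lemma C_rep (A k : ℝ) (α β γ δ : BY) : C k * rep A α β γ δ =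
    rep A (ca k * α) (ca k * β) (ca k * γ) (ca k * δ) := by
  simp only [rep, map_mul, psi_ca]
  ring
lemma add_rep (A : ℝ) (α β γ δ α' β' γ' δ' : BY) : rep A α β γ δ + rep A α' β' γ' δ' =
    rep A (α + α') (β + β') (γ + γ') (δ + δ') := by
  simp only [rep, map_add]
  ring
lemma sub_rep (A : ℝ) (α β γ δ α' β' γ' δ' : BY) : rep A α β γ δ - rep A α' β' γ' δ' =
    rep A (α - α') (β - β') (γ - γ') (δ - δ') := by
  simp only [rep, map_sub]
  ring

lemma exists_rep (A : ℝ) (f : M) : ∃ α β γ δ, f = rep A α β γ δ := by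
  induction f using MvPolynomial.induction_on with
  | C a => exact ⟨ca a, 0, 0, 0, by simp [rep, psi_ca]⟩
  | add p q hp hq =>
    obtain ⟨a, b, c, d, rfl⟩ := hp
    obtain ⟨a', b', c', d', rfl⟩ := hq
    exact ⟨_, _, _, _, add_rep ..⟩
  | mul_X p i hp =>
    obtain ⟨a, b, c, d, rfl⟩ := hp
    rw [mul_comm]
    fin_cases i
    · exact ⟨_, _, _, _, X0_rep ..⟩
    · exact ⟨_, _, _, _, X1_rep ..⟩
    · exact ⟨_, _, _, _, X2_rep ..⟩

lemma eval_iota (A : ℝ) (v : Fin 3 → ℝ) (b : B) :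
    eval v (iota A b) = eval ![v 0 ^ 2 + A * v 1 ^ 2, v 1 ^ 2 + v 2 ^ 2] b := by
  induction b using MvPolynomial.induction_on with
  | C a => simp [iota]
  | add p q hp hq => simp only [map_add, hp, hq]
  | mul_X p i hp =>
    simp only [map_mul, hp]
    congr 1
    fin_cases i <;> simp [iota, I1, I2]

lemma eval_psi (A : ℝ) (v : Fin 3 → ℝ) (p : BY) : eval v (psi A p) =
    eval ![v 0 ^ 2 + A * v 1 ^ 2, v 1 ^ 2 + v 2 ^ 2] (p.eval (C (v 1))) := by
  induction p using Polynomial.induction_on' with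
  | add p q hp hq => simp only [map_add, hp, hq, Polynomial.eval_add]
  | monomial n a =>
    rw [← Polynomial.C_mul_X_pow_eq_monomial]
    simp [psi_C, psi_X, eval_iota]

lemma psi_zero_of_eval (A : ℝ) (p : BY) (h : ∀ v, eval v (psi A p) = 0) : p = 0 := by
  have key : ∀ y : ℝ, p.IsRoot (C y) := by
    intro y
    apply MvPolynomial.funext_set (fun i : Fin 2 => if i = 0 then Set.Ici (A * y ^ 2)
      else Set.Ici (y ^ 2))
    · intro i; split_ifs <;> exact Set.Ici_infinite _
    · intro w hw
      have h0 : A * y ^ 2 ≤ w 0 := by simpa using hw 0 (Set.mem_univ _)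
      have h1 : y ^ 2 ≤ w 1 := by simpa using hw 1 (Set.mem_univ _)
      have := h ![Real.sqrt (w 0 - A * y ^ 2), y, Real.sqrt (w 1 - y ^ 2)]
      rw [eval_psi] at this
      simp only [Matrix.cons_val_zero, Matrix.cons_val_one, Matrix.cons_val] at this
      rw [Real.sq_sqrt (by linarith), Real.sq_sqrt (by linarith)] at this
      rw [map_zero, ← this]
      congr 2
      congr 1
      ext i
      fin_cases i <;> simp
  apply Polynomial.eq_zero_of_infinite_isRoot
  refine Set.Infinite.mono (s := Set.range (fun y : ℝ => (C y : B))) ?_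
    (Set.infinite_range_of_injective (MvPolynomial.C_injective _ _))
  rintro _ ⟨y, rfl⟩
  exact key y

lemma psi_nonneg_zero (A : ℝ) (p : BY) (h : ∀ v, v 0 * v 2 * eval v (psi A p) = 0) : p = 0 := by
  have : X 0 * X 2 * psi A p = 0 := by
    apply MvPolynomial.funext
    intro v; simpa using h v
  rcases mul_eq_zero.1 this with h | h
  · rcases mul_eq_zero.1 h with h | h <;> exact absurd h (X_ne_zero _)
  · exact psi_zero_of_eval A p (fun v => by rw [h]; simp)

lemma rep_zero (A : ℝ) {α β γ δ : BY} (h : rep A α β γ δ = 0) :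
    α = 0 ∧ β = 0 ∧ γ = 0 ∧ δ = 0 := by
  have key : ∀ v : Fin 3 → ℝ, ∀ s t : ℝ, s ^ 2 = 1 → t ^ 2 = 1 →
     eval v (psi A α) + s * v 0 * eval v (psi A β) + t * v 2 * eval v (psi A γ)
      + s * t * v 0 * v 2 * eval v (psi A δ) = 0 := by
    intro v s t hs ht
    have := congrArg (eval ![s * v 0, v 1, t * v 2]) h
    simp only [rep, map_add, map_mul, eval_psi, eval_X, map_zero] at this
    simp only [Matrix.cons_val_zero, Matrix.cons_val_one, Matrix.cons_val, mul_pow, hs, ht,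
      one_mul] at this
    simp only [eval_psi]
    linarith
  have k1 := fun v => key v 1 1 (by norm_num) (by norm_num)
  have k2 := fun v => key v 1 (-1) (by norm_num) (by norm_num)
  have k3 := fun v => key v (-1) 1 (by norm_num) (by norm_num)
  have k4 := fun v => key v (-1) (-1) (by norm_num) (by norm_num)
  refine ⟨psi_nonneg_zero A _ fun v => ?_, psi_nonneg_zero A _ fun v => ?_,
    psi_nonneg_zero A _ fun v => ?_, psi_nonneg_zero A _ fun v => ?_⟩
  · linear_combination (v 0 * v 2) / 4 * (k1 v + k2 v + k3 v + k4 v)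
  · linear_combination (v 2) / 4 * (k1 v + k2 v - k3 v - k4 v)
  · linear_combination (v 0) / 4 * (k1 v - k2 v + k3 v - k4 v)
  · linear_combination 1 / 4 * (k1 v - k2 v - k3 v + k4 v)

lemma rep_inj (A : ℝ) {α β γ δ α' β' γ' δ' : BY} (h : rep A α β γ δ = rep A α' β' γ' δ') :
    α = α' ∧ β = β' ∧ γ = γ' ∧ δ = δ' := by
  have := rep_zero A ((sub_rep A α β γ δ α' β' γ' δ').symm.trans (sub_eq_zero.2 h))
  simpa only [sub_eq_zero] using this

lemma iota_inj (A : ℝ) {b b' : B} (h : iota A b = iota A b') : b = b' := by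
  have := psi_zero_of_eval A (Polynomial.C (b - b')) (fun v => by
    rw [psi_C, map_sub, h]; simp)
  exact sub_eq_zero.1 (Polynomial.C_eq_zero.1 this)


lemma coeff_T1 (A : ℝ) (δ : BY) (n : ℕ) : (T1 A δ).coeff (n + 3) =
    C A * ((n : B) + 2) * δ.coeff n - (X 0 + C A * X 1) * ((n : B) + 3) * δ.coeff (n + 2)
      + X 0 * X 1 * ((n : B) + 4) * δ.coeff (n + 4) := by
  have : T1 A δ = Polynomial.C (2 * C A) * (Polynomial.X ^ 3 * δ)
    - Polynomial.C (X 0 + C A * X 1) * (Polynomial.X ^ 1 * δ)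
    + Polynomial.C (C A) * (Polynomial.X ^ 4 * Polynomial.derivative δ)
    - Polynomial.C (X 0 + C A * X 1) * (Polynomial.X ^ 2 * Polynomial.derivative δ)
    + Polynomial.C (X 0 * X 1) * Polynomial.derivative δ := by
    simp only [T1, ca, i1, i2, map_mul, map_add, map_ofNat]; ring
  rw [this]
  simp only [Polynomial.coeff_add, Polynomial.coeff_sub, Polynomial.coeff_C_mul,
    Polynomial.coeff_X_pow_mul', Polynomial.coeff_derivative]
  rcases n with _ | n
  · norm_num; ring
  · rw [if_pos (by omega), if_pos (by omega), if_pos (by omega), if_pos (by omega)]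
    rw [show n + 1 + 3 - 3 = n + 1 by omega, show n + 1 + 3 - 1 = n + 1 + 2 by omega,
      show n + 1 + 3 - 4 = n by omega, show n + 1 + 3 - 2 = n + 2 by omega,
      show n + 2 + 1 = n + 1 + 2 by omega, show n + 1 + 3 + 1 = n + 1 + 4 by omega]
    push_cast; ring

lemma coeff_T2 (γ : BY) (n : ℕ) : (T2 γ).coeff (n + 1) =
    ((n : B) + 1) * γ.coeff n - X 1 * ((n : B) + 2) * γ.coeff (n + 2) := by
  have : T2 γ = Polynomial.X ^ 1 * γ
    + (Polynomial.X ^ 2 * Polynomial.derivative γ)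
    - Polynomial.C (X 1) * Polynomial.derivative γ := by
    simp only [T2, i2]; ring
  rw [this]
  simp only [Polynomial.coeff_add, Polynomial.coeff_sub, Polynomial.coeff_C_mul,
    Polynomial.coeff_X_pow_mul', Polynomial.coeff_derivative]
  rcases n with _ | n
  · norm_num; ring
  · rw [if_pos (by omega), if_pos (by omega)]
    rw [show n + 1 + 1 - 1 = n + 1 by omega,
      show n + 1 + 1 - 2 = n by omega, show n + 1 + 1 + 1 = n + 1 + 2 by omega]
    push_cast; ring

lemma coeff_T3 (A : ℝ) (β : BY) (n : ℕ) : (T3 A β).coeff (n + 1) =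
    C A * ((n : B) + 1) * β.coeff n - X 0 * ((n : B) + 2) * β.coeff (n + 2) := by
  have : T3 A β = Polynomial.C (C A) * (Polynomial.X ^ 1 * β)
    + Polynomial.C (C A) * (Polynomial.X ^ 2 * Polynomial.derivative β)
    - Polynomial.C (X 0) * Polynomial.derivative β := by
    simp only [T3, i1, ca]; ring
  rw [this]
  simp only [Polynomial.coeff_add, Polynomial.coeff_sub, Polynomial.coeff_C_mul,
    Polynomial.coeff_X_pow_mul', Polynomial.coeff_derivative]
  rcases n with _ | n
  · norm_num; ring
  · rw [if_pos (by omega), if_pos (by omega)]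
    rw [show n + 1 + 1 - 1 = n + 1 by omega,
      show n + 1 + 1 - 2 = n by omega, show n + 1 + 1 + 1 = n + 1 + 2 by omega]
    push_cast; ring

lemma coeff_W1 (A : ℝ) (β : BY) (n : ℕ) : ((i1 - ca A * Polynomial.X ^ 2) * β).coeff (n + 2) =
    X 0 * β.coeff (n + 2) - C A * β.coeff n := by
  have : (i1 - ca A * Polynomial.X ^ 2) * β = Polynomial.C (X 0) * β
    - Polynomial.C (C A) * (Polynomial.X ^ 2 * β) := by
    simp only [i1, ca]; ring
  rw [this]
  simp [Polynomial.coeff_X_pow_mul']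

lemma coeff_W2 (β : BY) (n : ℕ) : ((i2 - Polynomial.X ^ 2) * β).coeff (n + 2) =
    X 1 * β.coeff (n + 2) - β.coeff n := by
  have : (i2 - Polynomial.X ^ 2) * β = Polynomial.C (X 1) * β - (Polynomial.X ^ 2 * β) := by
    simp only [i2]; ring
  rw [this]
  simp [Polynomial.coeff_X_pow_mul']

lemma coeff_ca (k : ℝ) (β : BY) (n : ℕ) : (ca k * β).coeff n = C k * β.coeff n := by
  simp [ca]

lemma big_zero {p : BY} {n : ℕ} (h : p.natDegree < n) : p.coeff n = 0 :=
  Polynomial.coeff_eq_zero_of_natDegree_lt h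

lemma bz2 (p : BY) : p.coeff (p.natDegree + 2) = 0 := big_zero (by omega)
lemma bz4 (p : BY) : p.coeff (p.natDegree + 4) = 0 := big_zero (by omega)

lemma lead_ne {p : BY} (h : p ≠ 0) : p.coeff p.natDegree ≠ 0 := by
  simpa using h

/-- A scalar times a nonzero element of `B`. -/
lemma sc_zero {r : ℝ} {b : B} (hb : b ≠ 0) (h : C r * b = 0) : r = 0 := by
  rcases mul_eq_zero.1 h with h | h
  · simpa using h
  · exact absurd h hb

lemma T1_small {A : ℝ} (hA : 0 < A) {δ : BY} (h : (T1 A δ).natDegree ≤ 2) : δ = 0 := by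
  by_contra hδ
  have h1 := coeff_T1 A δ δ.natDegree
  rw [big_zero (by omega), bz2, bz4] at h1
  have : C (A * (δ.natDegree + 2)) * δ.coeff δ.natDegree = 0 := by
    simp only [map_mul, map_add, map_natCast, map_ofNat]; linear_combination -h1
  have := sc_zero (lead_ne hδ) this
  have : 0 < A * ((δ.natDegree : ℝ) + 2) := by positivity
  linarith

lemma T2_small {γ : BY} (h : (T2 γ).natDegree ≤ 0) : γ = 0 := by
  by_contra hδ
  have h1 := coeff_T2 γ γ.natDegree
  rw [big_zero (by omega), bz2] at h1
  have : (C ((γ.natDegree + 1) : ℝ) : B) * γ.coeff γ.natDegree = 0 := by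
    simp only [map_add, map_natCast, map_one]; linear_combination -h1
  have := sc_zero (lead_ne hδ) this
  have : 0 < ((γ.natDegree : ℝ) + 1) := by positivity
  linarith

lemma T3_small {A : ℝ} (hA : 0 < A) {γ : BY} (h : (T3 A γ).natDegree ≤ 0) : γ = 0 := by
  by_contra hδ
  have h1 := coeff_T3 A γ γ.natDegree
  rw [big_zero (by omega), bz2] at h1
  have : C (A * (γ.natDegree + 1)) * γ.coeff γ.natDegree = 0 := by
    simp only [map_mul, map_add, map_natCast, map_one]; linear_combination -h1
  have := sc_zero (lead_ne hδ) this
  have : 0 < A * ((γ.natDegree : ℝ) + 1) := by positivity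
  linarith

lemma im_lemma {A : ℝ} (hA : 0 < A) {P : M} {p q r : BY} (hp : p.natDegree ≤ 2)
    (hq : q.natDegree ≤ 0) (hr : r.natDegree ≤ 0) (h : D A P = rep A p q r 0) :
    p = 0 ∧ q = 0 ∧ r = 0 := by
  obtain ⟨α, β, γ, δ, rfl⟩ := exists_rep A P
  rw [D_rep] at h
  obtain ⟨h1, h2, h3, h4⟩ := rep_inj A h
  have e1 : δ = 0 := T1_small hA (by rw [← Polynomial.natDegree_neg, h1]; exact hp)
  have e2 : γ = 0 := T2_small (by rw [h2]; exact hq)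
  have e3 : β = 0 := T3_small hA (by rw [h3]; exact hr)
  subst e1 e2 e3
  simp [T1, T2, T3] at h1 h2 h3
  exact ⟨h1.symm, h2.symm, h3.symm⟩

lemma im_quad {A : ℝ} (hA : 0 < A) {P : M} {a b c : B}
    (h : D A P = iota A a + X 1 * iota A b + X 1 ^ 2 * iota A c) : a = 0 ∧ b = 0 ∧ c = 0 := by
  have h1 := im_lemma hA (P := P)
    (p := Polynomial.C a + Polynomial.C b * Polynomial.X + Polynomial.C c * Polynomial.X ^ 2)
    (q := 0) (r := 0) (by compute_degree) (by simp) (by simp) (by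
      rw [h]; simp only [rep, map_add, map_mul, map_pow, psi_C, psi_X, map_zero]; ring)
  have h2 := h1.1
  refine ⟨?_, ?_, ?_⟩
  · simpa using congrArg (fun q => Polynomial.coeff q 0) h2
  · simpa [Polynomial.coeff_X, Polynomial.coeff_C] using congrArg (fun q => Polynomial.coeff q 1) h2
  · simpa [Polynomial.coeff_X, Polynomial.coeff_C] using congrArg (fun q => Polynomial.coeff q 2) h2

lemma im_lin {A : ℝ} (hA : 0 < A) {P : M} {k l m : ℝ} {H : B} (hH : H ≠ 0)
    (h : D A P = (C k * X 0 + C l * X 1 + C m * X 2) * iota A H) : k = 0 ∧ l = 0 ∧ m = 0 := by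
  have h1 := im_lemma hA (P := P)
    (p := Polynomial.C (C l * H) * Polynomial.X)
    (q := Polynomial.C (C k * H)) (r := Polynomial.C (C m * H))
    (by compute_degree!) (by rw [Polynomial.natDegree_C]) (by rw [Polynomial.natDegree_C]) (by
      have hC : ∀ s : ℝ, iota A (C s) = C s := fun s => by simp [iota, MvPolynomial.algebraMap_eq]
      rw [h]; simp only [rep, map_mul, psi_C, psi_X, map_zero, hC]; ring)
  obtain ⟨h2, h3, h4⟩ := h1
  refine ⟨sc_zero hH (by simpa using h3), sc_zero hH ?_, sc_zero hH (by simpa using h4)⟩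
  simpa using congrArg (fun q => Polynomial.coeff q 1) h2

lemma ker_D {A : ℝ} (hA : 0 < A) {P : M} (h : D A P = 0) : ∃ b : B, P = iota A b := by
  obtain ⟨α, β, γ, δ, rfl⟩ := exists_rep A P
  rw [D_rep] at h
  obtain ⟨h1, h2, h3, h4⟩ := rep_zero A h
  have e1 : δ = 0 := T1_small hA (by rw [← Polynomial.natDegree_neg, h1]; simp)
  have e2 : γ = 0 := T2_small (by rw [h2]; simp)
  have e3 : β = 0 := T3_small hA (by rw [h3]; simp)
  subst e1 e2 e3
  have := Polynomial.derivative_eq_zero.1 (neg_eq_zero.1 h4)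
  rw [Polynomial.eq_C_of_natDegree_eq_zero this]
  exact ⟨α.coeff 0, by simp [rep, psi_C]⟩

lemma C_of_der {α : BY} (h : Polynomial.derivative α = 0) : α = Polynomial.C (α.coeff 0) :=
  Polynomial.eq_C_of_natDegree_eq_zero (Polynomial.derivative_eq_zero.1 h)

lemma ca_zero {k : ℝ} (hk : k ≠ 0) {p : BY} (h : ca k * p = 0) : p = 0 := by
  rcases mul_eq_zero.1 h with h | h
  · simp [ca, hk] at h
  · exact h

lemma eigen_x {A : ℝ} (hA : 0 < A) {k : ℝ} {f : M} (hf : f ≠ 0) (h : D A f = C k * (X 0 * f)) :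
    k = 0 := by
  by_contra hk
  apply hf
  obtain ⟨α, β, γ, δ, rfl⟩ := exists_rep A f
  rw [D_rep, X0_rep, C_rep] at h
  obtain ⟨h1, h2, h3, h4⟩ := rep_inj A h
  have e2 : γ = 0 := by
    by_contra hγ
    have c1 := coeff_T2 γ γ.natDegree
    rw [h2, coeff_ca, bz2] at c1
    have c2 := congrArg (fun q => Polynomial.coeff q γ.natDegree) h4
    simp only [Polynomial.coeff_neg, Polynomial.coeff_derivative, coeff_ca] at c2
    have := sc_zero (r := (γ.natDegree + 1) ^ 2 + k ^ 2) (lead_ne hγ) (by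
      simp only [map_add, map_pow, map_natCast, map_one]
      linear_combination -((γ.natDegree : B) + 1) * c1 - C k * c2)
    have : 0 < ((γ.natDegree : ℝ) + 1) ^ 2 := by positivity
    nlinarith [sq_nonneg k]
  have e1 : α = 0 := by
    subst e2
    exact ca_zero hk (by rw [← h2]; simp [T2])
  have e4 : δ = 0 := by
    by_contra hδ
    have hβ : β.natDegree ≤ δ.natDegree + 1 := by
      by_contra! hlt
      obtain ⟨e, he⟩ : ∃ e, β.natDegree = e + 1 := ⟨β.natDegree - 1, by omega⟩
      have hb0 : β ≠ 0 := by rintro rfl; simp at he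
      have c1 := coeff_T3 A β β.natDegree
      rw [h3, coeff_ca, bz2] at c1
      rw [show β.natDegree + 1 = e + 2 by omega, coeff_W1, big_zero (p := δ) (by omega),
        big_zero (p := δ) (by omega)] at c1
      have := sc_zero (r := A * (β.natDegree + 1)) (lead_ne hb0) (by
        simp only [map_add, map_mul, map_natCast, map_one]
        linear_combination -c1)
      have : 0 < A * ((β.natDegree : ℝ) + 1) := by positivity
      linarith
    have c1 := coeff_T1 A δ δ.natDegree
    rw [← neg_neg (T1 A δ), h1, Polynomial.coeff_neg, coeff_ca, bz2, bz4, show δ.natDegree + 3 = (δ.natDegree + 1) + 2 by omega, coeff_W1,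
      big_zero (p := β) (by omega)] at c1
    have c2 := coeff_T3 A β (δ.natDegree + 1)
    rw [h3, coeff_ca, show δ.natDegree + 1 + 1 = δ.natDegree + 2 by omega, coeff_W1,
      big_zero (p := δ) (by omega), big_zero (p := β) (n := δ.natDegree + 1 + 2) (by omega)] at c2
    push_cast at c2
    have := sc_zero (r := A * ((δ.natDegree + 2) ^ 2 + k ^ 2)) (lead_ne hδ) (by
      simp only [map_add, map_mul, map_pow, map_natCast, map_ofNat]
      linear_combination -((δ.natDegree : B) + 2) * c1 - C k * c2)
    have : 0 < A * (((δ.natDegree : ℝ) + 2) ^ 2 + k ^ 2) := by positivity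
    linarith
  have e3 : β = 0 := by
    subst e4
    exact T3_small hA (by rw [h3]; simp)
  subst e1 e2 e3 e4
  simp [rep]

lemma eigen_z {A : ℝ} (hA : 0 < A) {k : ℝ} {f : M} (hf : f ≠ 0) (h : D A f = C k * (X 2 * f)) :
    k = 0 := by
  by_contra hk
  apply hf
  obtain ⟨α, β, γ, δ, rfl⟩ := exists_rep A f
  rw [D_rep, X2_rep, C_rep] at h
  obtain ⟨h1, h2, h3, h4⟩ := rep_inj A h
  have e2 : β = 0 := by
    by_contra hγ
    have c1 := coeff_T3 A β β.natDegree
    rw [h3, coeff_ca, bz2] at c1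
    have c2 := congrArg (fun q => Polynomial.coeff q β.natDegree) h4
    simp only [Polynomial.coeff_neg, Polynomial.coeff_derivative, coeff_ca] at c2
    have := sc_zero (r := A * (β.natDegree + 1) ^ 2 + k ^ 2) (lead_ne hγ) (by
      simp only [map_add, map_mul, map_pow, map_natCast, map_one]
      linear_combination -((β.natDegree : B) + 1) * c1 - C k * c2)
    have : 0 < A * ((β.natDegree : ℝ) + 1) ^ 2 := by positivity
    nlinarith [sq_nonneg k]
  have e1 : α = 0 := by
    subst e2
    exact ca_zero hk (by rw [← h3]; simp [T3])
  have e4 : δ = 0 := by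
    by_contra hδ
    have hβ : γ.natDegree ≤ δ.natDegree + 1 := by
      by_contra! hlt
      obtain ⟨e, he⟩ : ∃ e, γ.natDegree = e + 1 := ⟨γ.natDegree - 1, by omega⟩
      have hb0 : γ ≠ 0 := by rintro rfl; simp at he
      have c1 := coeff_T2 γ γ.natDegree
      rw [h2, coeff_ca, bz2] at c1
      rw [show γ.natDegree + 1 = e + 2 by omega, coeff_W2, big_zero (p := δ) (by omega),
        big_zero (p := δ) (by omega)] at c1
      have := sc_zero (r := (γ.natDegree + 1)) (lead_ne hb0) (by
        simp only [map_add, map_natCast, map_one]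
        linear_combination -c1)
      have : 0 < ((γ.natDegree : ℝ) + 1) := by positivity
      linarith
    have c1 := coeff_T1 A δ δ.natDegree
    rw [← neg_neg (T1 A δ), h1, Polynomial.coeff_neg, coeff_ca, bz2, bz4, show δ.natDegree + 3 = (δ.natDegree + 1) + 2 by omega, coeff_W2,
      big_zero (p := γ) (by omega)] at c1
    have c2 := coeff_T2 γ (δ.natDegree + 1)
    rw [h2, coeff_ca, show δ.natDegree + 1 + 1 = δ.natDegree + 2 by omega, coeff_W2,
      big_zero (p := δ) (by omega), big_zero (p := γ) (n := δ.natDegree + 1 + 2) (by omega)] at c2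
    push_cast at c2
    have := sc_zero (r := (A * (δ.natDegree + 2) ^ 2 + k ^ 2)) (lead_ne hδ) (by
      simp only [map_add, map_mul, map_pow, map_natCast, map_ofNat]
      linear_combination -((δ.natDegree : B) + 2) * c1 - C k * c2)
    have : 0 < (A * ((δ.natDegree : ℝ) + 2) ^ 2 + k ^ 2) := by positivity
    linarith
  have e3 : γ = 0 := by
    subst e4
    exact T2_small (by rw [h2]; simp)
  subst e1 e2 e3 e4
  simp [rep]

lemma eigen_y {A : ℝ} (hA : 0 < A) {k : ℝ} {f : M} (hf : f ≠ 0) (h : D A f = C k * (X 1 * f)) :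
    ∃ m : ℕ, k ^ 2 = A * m ^ 2 := by
  by_contra! hk
  have hk0 : k ≠ 0 := by rintro rfl; exact hk 0 (by simp)
  apply hf
  obtain ⟨α, β, γ, δ, rfl⟩ := exists_rep A f
  rw [D_rep, X1_rep, C_rep] at h
  obtain ⟨h1, h2, h3, h4⟩ := rep_inj A h
  have e4 : δ = 0 := by
    by_contra hδ
    have c1 := coeff_T1 A δ δ.natDegree
    rw [← neg_neg (T1 A δ), h1, Polynomial.coeff_neg, coeff_ca, bz2, bz4, show δ.natDegree + 3 = (δ.natDegree + 2) + 1 by omega,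
      Polynomial.coeff_X_mul] at c1
    have c2 := congrArg (fun q => Polynomial.coeff q (δ.natDegree + 1)) h4
    simp only [Polynomial.coeff_neg, Polynomial.coeff_derivative, coeff_ca,
      Polynomial.coeff_X_mul] at c2
    push_cast at c2
    have := sc_zero (r := (k ^ 2 - A * (δ.natDegree + 2) ^ 2)) (lead_ne hδ) (by
      simp only [map_add, map_sub, map_mul, map_pow, map_natCast, map_ofNat]
      linear_combination ((δ.natDegree : B) + 2) * c1 - C k * c2)
    exact hk (δ.natDegree + 2) (by push_cast; linarith)
  have e1 : α = 0 := by
    subst e4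
    have := ca_zero hk0 (h1.symm.trans (by simp [T1]))
    simpa using this
  have e2 : γ = 0 := by
    by_contra hγ
    have hβ : β.natDegree ≤ γ.natDegree := by
      by_contra! hlt
      have hb0 : β ≠ 0 := by rintro rfl; simp at hlt
      have c1 := coeff_T3 A β β.natDegree
      rw [h3, coeff_ca, bz2, Polynomial.coeff_X_mul,
        big_zero (p := γ) (by omega)] at c1
      have := sc_zero (r := A * (β.natDegree + 1)) (lead_ne hb0) (by
        simp only [map_add, map_mul, map_natCast, map_one]
        linear_combination -c1)
      have : 0 < A * ((β.natDegree : ℝ) + 1) := by positivity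
      linarith
    have c1 := coeff_T2 γ γ.natDegree
    rw [h2, coeff_ca, bz2, Polynomial.coeff_X_mul] at c1
    have c2 := coeff_T3 A β γ.natDegree
    rw [h3, coeff_ca, big_zero (p := β) (n := γ.natDegree + 2) (by omega), Polynomial.coeff_X_mul] at c2
    have := sc_zero (r := (k ^ 2 - A * (γ.natDegree + 1) ^ 2)) (lead_ne hγ) (by
      simp only [map_add, map_sub, map_mul, map_pow, map_natCast, map_one]
      linear_combination C A * ((γ.natDegree : B) + 1) * c1 + C k * c2)
    exact hk (γ.natDegree + 1) (by push_cast; linarith)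
  have e3 : β = 0 := by
    subst e2
    exact T3_small hA (by rw [h3]; simp)
  subst e1 e2 e3 e4
  simp [rep]

/-- Reflections anticommuting with `D`. -/
noncomputable def sx : M →ₐ[ℝ] M := aeval ![-X 0, X 1, X 2]
noncomputable def sz : M →ₐ[ℝ] M := aeval ![X 0, X 1, -X 2]

lemma sx0 : sx (X 0) = -X 0 := by simp [sx]
lemma sx1 : sx (X 1) = X 1 := by simp [sx]
lemma sx2 : sx (X 2) = X 2 := by simp [sx]
lemma sz0 : sz (X 0) = X 0 := by simp [sz]
lemma sz1 : sz (X 1) = X 1 := by simp [sz]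
lemma sz2 : sz (X 2) = -X 2 := by simp [sz]
lemma sxC (a : ℝ) : sx (C a) = C a := by simp [sx, MvPolynomial.algebraMap_eq]
lemma szC (a : ℝ) : sz (C a) = C a := by simp [sz, MvPolynomial.algebraMap_eq]

lemma D_sx (A : ℝ) (f : M) : D A (sx f) = - sx (D A f) := by
  induction f using MvPolynomial.induction_on with
  | C a => rw [sxC, D_C, map_zero, neg_zero]
  | add p q hp hq => simp only [map_add, hp, hq]; ring
  | mul_X p i hp =>
    fin_cases i
    · simp only [Fin.zero_eta, map_mul, sx0, sx1, sx2, sxC, Derivation.leibniz, hp, smul_eq_mul,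
        map_add, map_neg, D_X0]; ring
    · simp only [Fin.mk_one, map_mul, sx0, sx1, sx2, Derivation.leibniz, hp, smul_eq_mul,
        map_add, map_neg, D_X1]; ring
    · simp only [Fin.reduceFinMk, map_mul, sx0, sx1, sx2, Derivation.leibniz, hp, smul_eq_mul,
        map_add, D_X2]; ring

lemma D_sz (A : ℝ) (f : M) : D A (sz f) = - sz (D A f) := by
  induction f using MvPolynomial.induction_on with
  | C a => rw [szC, D_C, map_zero, neg_zero]
  | add p q hp hq => simp only [map_add, hp, hq]; ring
  | mul_X p i hp =>
    fin_cases i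
    · simp only [Fin.zero_eta, map_mul, sz0, sz1, sz2, szC, Derivation.leibniz, hp, smul_eq_mul,
        map_add, D_X0]; ring
    · simp only [Fin.mk_one, map_mul, sz0, sz1, sz2, Derivation.leibniz, hp, smul_eq_mul,
        map_add, map_neg, D_X1]; ring
    · simp only [Fin.reduceFinMk, map_mul, sz0, sz1, sz2, Derivation.leibniz, hp, smul_eq_mul,
        map_add, map_neg, D_X2]; ring

lemma sx_sx (f : M) : sx (sx f) = f := by
  have : sx.comp sx = AlgHom.id ℝ M := by
    apply MvPolynomial.algHom_ext
    intro i
    fin_cases i <;> simp [sx]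
  simpa using DFunLike.congr_fun this f

lemma sz_sz (f : M) : sz (sz f) = f := by
  have : sz.comp sz = AlgHom.id ℝ M := by
    apply MvPolynomial.algHom_ext
    intro i
    fin_cases i <;> simp [sz]
  simpa using DFunLike.congr_fun this f

lemma eigen_gen {A : ℝ} (hA : 0 < A) {kx ky kz : ℝ} {f : M} (hf : f ≠ 0)
    (h : D A f = (C kx * X 0 + C ky * X 1 + C kz * X 2) * f) : kx = 0 ∧ kz = 0 := by
  constructor
  · have hs : sx f ≠ 0 := fun h0 => hf (by rw [← sx_sx f, h0, map_zero])
    have := eigen_x hA (k := 2 * kx) (f := f * sx f) (mul_ne_zero hf hs) (by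
      rw [Derivation.leibniz, D_sx, h]
      simp only [map_mul, map_add, sx0, sx1, sx2, sxC, smul_eq_mul, map_ofNat]; ring)
    linarith
  · have hs : sz f ≠ 0 := fun h0 => hf (by rw [← sz_sz f, h0, map_zero])
    have := eigen_z hA (k := 2 * kz) (f := f * sz f) (mul_ne_zero hf hs) (by
      rw [Derivation.leibniz, D_sz, h]
      simp only [map_mul, map_add, sz0, sz1, sz2, szC, smul_eq_mul, map_ofNat]; ring)
    linarith

lemma eigen_y' {A : ℝ} (hA : 0 < A) {k : ℝ} {f : M} (hf : f ≠ 0)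
    (h : D A f = C k * (X 1 * f)) : ∃ (ρ : ℝ) (m : ℕ), ρ ^ 2 = A ∧ k = ρ * m := by
  obtain ⟨m, hm⟩ := eigen_y hA hf h
  have hs : Real.sqrt A ^ 2 = A := Real.sq_sqrt hA.le
  have : (k - Real.sqrt A * m) * (k + Real.sqrt A * m) = 0 := by
    linear_combination hm - (m : ℝ) ^ 2 * hs
  rcases mul_eq_zero.1 this with h | h
  · exact ⟨Real.sqrt A, m, hs, by linarith⟩
  · exact ⟨-Real.sqrt A, m, by rw [neg_sq, hs], by linarith⟩

/-- Linear part of the vector field. -/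
noncomputable def S (c σ : ℝ) : Derivation ℝ M M :=
  (C c * X 2 - C σ * X 0 : M) • pderiv 0 + (-X 1 : M) • pderiv 1 + (-X 2 : M) • pderiv 2
/-- Euler derivation. -/
noncomputable def Eu : Derivation ℝ M M :=
  (X 0 : M) • pderiv 0 + (X 1 : M) • pderiv 1 + (X 2 : M) • pderiv 2

lemma S_apply (c σ : ℝ) (f : M) : S c σ f = (C c * X 2 - C σ * X 0) * pderiv 0 f
    + -X 1 * pderiv 1 f + -X 2 * pderiv 2 f := by
  simp [S]
lemma Eu_apply (f : M) : Eu f = X 0 * pderiv 0 f + X 1 * pderiv 1 f + X 2 * pderiv 2 f := by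
  simp [Eu]
lemma S_X0 (c σ : ℝ) : S c σ (X 0) = C c * X 2 - C σ * X 0 := by
  rw [S_apply]; simp [pderiv_X]
lemma S_X1 (c σ : ℝ) : S c σ (X 1) = -X 1 := by
  rw [S_apply]; simp [pderiv_X]
lemma S_X2 (c σ : ℝ) : S c σ (X 2) = -X 2 := by
  rw [S_apply]; simp [pderiv_X]
lemma S_C (c σ a : ℝ) : S c σ (C a) = 0 := by
  rw [S_apply]; simp
lemma Eu_X0 : Eu (X 0) = X 0 := by rw [Eu_apply]; simp [pderiv_X]
lemma Eu_X1 : Eu (X 1) = X 1 := by rw [Eu_apply]; simp [pderiv_X]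
lemma Eu_X2 : Eu (X 2) = X 2 := by rw [Eu_apply]; simp [pderiv_X]
lemma Eu_C (a : ℝ) : Eu (C a) = 0 := by rw [Eu_apply]; simp

lemma Eu_iota (A : ℝ) (b : B) :
    Eu (iota A b) = iota A (2 * (X 0 * pderiv 0 b + X 1 * pderiv 1 b)) := by
  have h0 : iota A (X 0) = I1 A := by simp [iota]
  have h1 : iota A (X 1) = I2 := by simp [iota]
  rw [der_iota]
  simp only [map_mul, map_add, h0, h1, map_ofNat]
  simp only [I1, I2, map_add, Derivation.leibniz, Derivation.leibniz_pow, Eu_X0, Eu_X1, Eu_X2,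
    Eu_C, smul_eq_mul, nsmul_eq_mul]
  push_cast; ring

lemma S_iota (A c σ : ℝ) (b : B) : S c σ (iota A b) =
    iota A (pderiv 0 b) * (2 * C c * X 0 * X 2 - 2 * C σ * I1 A - 2 * C A * (1 - C σ) * X 1 ^ 2)
      - 2 * I2 * iota A (pderiv 1 b) := by
  rw [der_iota]
  simp only [I1, I2, map_add, Derivation.leibniz, Derivation.leibniz_pow, S_X0, S_X1, S_X2,
    S_C, smul_eq_mul, nsmul_eq_mul]
  push_cast; ring

lemma coeff_X_pd (H : B) (i : Fin 2) (d : Fin 2 →₀ ℕ) :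
    coeff d (X i * pderiv i H) = d i * coeff d H := by
  rw [coeff_X_mul']
  split_ifs with h
  · have h1 : 1 ≤ d i := Nat.one_le_iff_ne_zero.2 (Finsupp.mem_support_iff.1 h)
    have h2 : d - Finsupp.single i 1 + Finsupp.single i 1 = d :=
      tsub_add_cancel_of_le (by simpa using h1)
    rw [coeff_pderiv, h2]
    have h3 : (((d - Finsupp.single i 1 : Fin 2 →₀ ℕ) i : ℕ) : ℝ) + 1 = d i := by
      rw [Finsupp.tsub_apply, Finsupp.single_eq_same]; push_cast [h1]; ring
    rw [h3]; ring
  · have : d i = 0 := by simpa using h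
    simp [this]

/-- Euler eigenvalues on `B` are even. -/
lemma euler_deg {A r : ℝ} {H : B} (h : Eu (iota A H) = C r * iota A H) (d : Fin 2 →₀ ℕ)
    (hd : coeff d H ≠ 0) : r = 2 * ((d 0 + d 1 : ℕ) : ℝ) := by
  have hC : C r * iota A H = iota A (C r * H) := by
    simp [iota, MvPolynomial.algebraMap_eq]
  rw [Eu_iota, hC] at h
  have h1 := congrArg (coeff d) (iota_inj A h)
  rw [show (2 : B) = C 2 from (map_ofNat C 2).symm, coeff_C_mul, coeff_C_mul, coeff_add, coeff_X_pd, coeff_X_pd] at h1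
  have : (r - 2 * ((d 0 + d 1 : ℕ) : ℝ)) * coeff d H = 0 := by push_cast; linarith
  rcases mul_eq_zero.1 this with h | h
  · linarith
  · exact absurd h hd

lemma euler_B {A r : ℝ} {H : B} (h : Eu (iota A H) = C r * iota A H) :
    2 * (X 0 * pderiv 0 H + X 1 * pderiv 1 H) = C r * H := by
  have hC : C r * iota A H = iota A (C r * H) := by
    simp [iota, MvPolynomial.algebraMap_eq]
  rw [Eu_iota, hC] at h
  exact iota_inj A h

/-- The point `(0,0,1)`. -/
noncomputable def ez : M →+* ℝ := eval ![0, 0, 1]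

lemma min_order {H : B} (hH : H ≠ 0)
    (step : ∀ d : Fin 2 →₀ ℕ, 1 ≤ d 0 → (∀ e : Fin 2 →₀ ℕ, e 0 < d 0 → coeff e H = 0) →
      coeff d H = 0) : ∃ d : Fin 2 →₀ ℕ, d 0 = 0 ∧ coeff d H ≠ 0 := by
  by_contra! hcon
  apply hH
  have : ∀ n, ∀ d : Fin 2 →₀ ℕ, d 0 = n → coeff d H = 0 := by
    intro n
    induction n using Nat.strong_induction_on with
    | _ n ih =>
      intro d hd
      rcases Nat.eq_zero_or_pos n with h0 | h0
      · exact hcon d (by omega)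
      · exact step d (by omega) (fun e he => ih (e 0) (by omega) e rfl)
  ext d
  simpa using this _ d rfl

lemma ez_iota {A r : ℝ} {H : B} (h : Eu (iota A H) = C r * iota A H)
    (hd : ∃ d : Fin 2 →₀ ℕ, d 0 = 0 ∧ coeff d H ≠ 0) : ez (iota A H) ≠ 0 := by
  obtain ⟨d, hd0, hd⟩ := hd
  have hr := euler_deg h d hd
  rw [ez, eval_iota]
  have : eval ![(0 : ℝ), 1] H = coeff d H := by
    rw [eval_eq']
    rw [Finset.sum_eq_single d]
    · simp [Fin.prod_univ_two, hd0]
    · intro e he hne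
      have hr' := euler_deg h e (mem_support_iff.1 he)
      have he0 : e 0 ≠ 0 := by
        intro h0
        apply hne
        have : e 0 + e 1 = d 0 + d 1 := by
          have : ((e 0 + e 1 : ℕ) : ℝ) = ((d 0 + d 1 : ℕ) : ℝ) := by linarith
          exact_mod_cast this
        ext i
        fin_cases i
        · simp [h0, hd0]
        · show e 1 = d 1
          omega
      simp [Fin.prod_univ_two, he0]
    · intro h; simp [notMem_support_iff.1 h]
  simpa [this] using hd

lemma iota_C (A a : ℝ) : iota A (C a) = C a := by simp [iota, MvPolynomial.algebraMap_eq]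
lemma iota_X0 (A : ℝ) : iota A (X 0) = I1 A := by simp [iota]
lemma iota_X1 (A : ℝ) : iota A (X 1) = I2 := by simp [iota]

noncomputable def vv (ρ : ℝ) : M := X 0 - C ρ * X 2

lemma vv_ne (ρ : ℝ) : vv ρ ≠ 0 := by
  intro h
  have := congrArg (eval ![1, 0, 0]) h
  simp [vv] at this

lemma D_vv (ρ : ℝ) : D (ρ ^ 2) (vv ρ) = - (C ρ * X 1 * vv ρ) := by
  simp only [vv, map_sub, Derivation.leibniz, D_X0, D_X2, D_C, smul_eq_mul, map_pow]; ring

lemma pow_pred (m : ℕ) (a : M) : (m : M) * (a ^ (m - 1) * a) = m * a ^ m := by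
  rcases m with _ | m
  · simp
  · simp [pow_succ]

lemma D_vpow (ρ : ℝ) (m : ℕ) : D (ρ ^ 2) (vv ρ ^ m) = - (C (ρ * m) * X 1 * vv ρ ^ m) := by
  rw [Derivation.leibniz_pow, D_vv]
  simp only [smul_eq_mul, nsmul_eq_mul, map_mul, map_natCast]
  linear_combination (-C ρ * X 1) * pow_pred m (vv ρ)

lemma mul_v {ρ : ℝ} {m : ℕ} {F : M} (hρ : 0 < ρ ^ 2)
    (h : D (ρ ^ 2) F = C (ρ * m) * (X 1 * F)) : ∃ H : B, F * vv ρ ^ m = iota (ρ ^ 2) H := by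
  apply ker_D hρ
  rw [Derivation.leibniz, D_vpow, h]
  simp only [smul_eq_mul]; ring

lemma Eu_vpow (ρ : ℝ) (m : ℕ) : Eu (vv ρ ^ m) = m * vv ρ ^ m := by
  have : Eu (vv ρ) = vv ρ := by
    simp only [vv, map_sub, Derivation.leibniz, Eu_X0, Eu_X2, Eu_C, smul_eq_mul]; ring
  rw [Derivation.leibniz_pow, this]
  simp only [smul_eq_mul, nsmul_eq_mul]
  exact pow_pred m _

lemma Eu_H {ρ r A : ℝ} {m : ℕ} {F : M} {H : B} (hF : Eu F = C r * F)
    (h : F * vv ρ ^ m = iota A H) :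
    Eu (iota A H) = C (r + m) * iota A H := by
  rw [← h, Derivation.leibniz, Eu_vpow, hF]
  simp only [smul_eq_mul, map_add, map_natCast]; ring

lemma H_ne {ρ A : ℝ} {m : ℕ} {F : M} {H : B} (hF : F ≠ 0)
    (h : F * vv ρ ^ m = iota A H) : H ≠ 0 := by
  rintro rfl
  rw [map_zero] at h
  exact mul_ne_zero hF (pow_ne_zero _ (vv_ne ρ)) h

/-- Two-level computation. -/
lemma TL_core {ρ c σ k0 : ℝ} {m : ℕ} (hρ : ρ ≠ 0) {F F' : M} {H : B}
    (h1 : F * vv ρ ^ m = iota (ρ ^ 2) H)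
    (h2 : D (ρ ^ 2) F' + S c σ F = C (ρ * m) * (X 1 * F') + C k0 * F) :
    C (1 - σ) * (X 0 - C (ρ ^ 2) * X 1) * pderiv 0 H = C (m * ((1 - σ) / 2 + c / (2 * ρ))) * H ∧
    (X 0 - C (ρ ^ 2) * X 1) * (C (k0 + m * (-(σ + 1) / 2 - c / (2 * ρ))) * H
      + C (2 * σ) * X 0 * pderiv 0 H + 2 * X 1 * pderiv 1 H)
      + C (m * ((1 - σ) / 2 + c / (2 * ρ))) * H * (X 0 + C (ρ ^ 2) * X 1) = 0 := by
  have hA : 0 < ρ ^ 2 := by positivity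
  obtain ⟨r, hr⟩ : ∃ r, r = (1 - σ) / 2 + c / (2 * ρ) := ⟨_, rfl⟩
  obtain ⟨p, hp⟩ : ∃ p, p = -(σ + 1) / 2 - c / (2 * ρ) := ⟨_, rfl⟩
  have hs1 : p + r = -σ := by rw [hp, hr]; ring
  have hs2 : ρ * r - ρ * p = c + ρ := by rw [hp, hr]; field_simp; ring
  rw [← hr, ← hp]
  have hSv : S c σ (vv ρ) = C p * vv ρ + C r * (X 0 + C ρ * X 2) := by
    have e1 : (C p + C r : M) = - C σ := by rw [← map_add, hs1, map_neg]
    have e2 : (C ρ * C r - C ρ * C p : M) = C c + C ρ := by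
      rw [← map_mul, ← map_mul, ← map_sub, hs2, map_add]
    simp only [vv, map_sub, Derivation.leibniz, S_X0, S_X2, S_C, smul_eq_mul]
    linear_combination -X 0 * e1 - X 2 * e2
  have hSH : S c σ (iota (ρ ^ 2) H) =
      S c σ F * vv ρ ^ m + m * F * vv ρ ^ (m - 1) * S c σ (vv ρ) := by
    rw [← h1, Derivation.leibniz, Derivation.leibniz_pow]
    simp only [smul_eq_mul, nsmul_eq_mul]; ring
  have hpp := pow_pred m (vv ρ)
  set Δ : B := X 0 - C (ρ ^ 2) * X 1 with hΔ
  have hΔM : iota (ρ ^ 2) Δ = vv ρ * (X 0 + C ρ * X 2) := by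
    simp only [hΔ, vv, map_sub, map_mul, iota_C, iota_X0, iota_X1, I1, I2, map_pow]; ring
  set E : B := -2 * C c * Δ * pderiv 0 H + 2 * C (m * ρ * r) * H with hE
  have key : D (ρ ^ 2) (iota (ρ ^ 2) Δ * (F' * vv ρ ^ m) + X 1 * iota (ρ ^ 2) E) =
      iota (ρ ^ 2) (Δ * (C (k0 + m * p) * H
      + C (2 * σ) * X 0 * pderiv 0 H + 2 * X 1 * pderiv 1 H)
      + C (m * r) * H * (X 0 + C (ρ ^ 2) * X 1)) + X 1 * iota (ρ ^ 2) 0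
      + X 1 ^ 2 * iota (ρ ^ 2) (2 * C (ρ ^ 2) * (C (1 - σ) * Δ * pderiv 0 H - C (m * r) * H)) := by
    have hD : D (ρ ^ 2) (F' * vv ρ ^ m) = C k0 * iota (ρ ^ 2) H - S c σ F * vv ρ ^ m := by
      rw [Derivation.leibniz, D_vpow, ← h1]
      simp only [smul_eq_mul]
      linear_combination vv ρ ^ m * h2
    have hD2 : D (ρ ^ 2) (iota (ρ ^ 2) Δ * (F' * vv ρ ^ m)) = iota (ρ ^ 2) Δ * (C k0 * iota (ρ ^ 2) H
        - S c σ (iota (ρ ^ 2) H)) + (m : M) * iota (ρ ^ 2) H * (X 0 + C ρ * X 2) * S c σ (vv ρ) := by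
      rw [Derivation.leibniz, D_iota, hD, hSH, ← h1]
      simp only [smul_eq_mul]
      rw [hΔM]
      linear_combination ((X 0 + C ρ * X 2) * F * S c σ (vv ρ)) * hpp
    rw [map_add, hD2, Derivation.leibniz, D_iota, D_X1, S_iota, hSv]
    simp only [map_add, map_mul, map_sub, map_neg, hE, hΔM, iota_C, iota_X0, iota_X1, map_ofNat,
      map_zero, map_natCast, map_one, map_pow, smul_eq_mul, I1, I2, vv]
    ring
  obtain ⟨ka, -, kc⟩ := im_quad hA key
  refine ⟨?_, ka⟩
  rcases mul_eq_zero.1 kc with h | h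
  · exfalso
    rcases mul_eq_zero.1 h with h | h
    · exact two_ne_zero h
    · rw [C_eq_zero] at h; exact hA.ne' h
  · exact sub_eq_zero.1 h

lemma Delta_ne (a : ℝ) : (X 0 - C a * X 1 : B) ≠ 0 := by
  intro h
  have := congrArg (eval ![1, 0]) h
  simp at this

/-- Two-level lemma. -/
lemma TL {A c σ k0 k l : ℝ} (hA : 0 < A) (hc : 0 < c) {F F' : M} (hF : F ≠ 0)
    (hE : Eu F = C l * F) (h1 : D A F = C k * (X 1 * F))
    (h2 : D A F' + S c σ F = C k * (X 1 * F') + C k0 * F) :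
    l = c * k / A - k0 ∧ (σ = 1 → k = 0) ∧ (σ ≠ 1 → ez F ≠ 0) := by
  obtain ⟨ρ, m, rfl, rfl⟩ := eigen_y' hA hF h1
  have hρ : ρ ≠ 0 := by rintro rfl; simp at hA
  obtain ⟨H, hH⟩ := mul_v hA h1
  have hH0 := H_ne hF hH
  have hEH := Eu_H hE hH
  have hEB := euler_B hEH
  obtain ⟨q1, q2⟩ := TL_core hρ hH h2
  refine ⟨?_, ?_, ?_⟩
  · have : C (k0 + l - m * (c / ρ)) * ((X 0 - C (ρ ^ 2) * X 1) * H) = 0 := by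
      have e1 : (k0 + l - m * (c / ρ)) = (k0 + m * (-(σ + 1) / 2 - c / (2 * ρ))) + (l + m) -
          m * ((1 - σ) / 2 + c / (2 * ρ)) := by field_simp; ring
      rw [e1]
      generalize m * ((1 - σ) / 2 + c / (2 * ρ)) = r at *
      generalize (k0 + m * (-(σ + 1) / 2 - c / (2 * ρ))) = p at *
      simp only [map_sub, map_add, map_mul, map_ofNat, map_one] at q1 q2 hEB ⊢
      linear_combination q2 - (X 0 - C (ρ ^ 2) * X 1) * hEB + 2 * X 0 * q1
    have := sc_zero (mul_ne_zero (Delta_ne _) hH0) this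
    have e2 : c * (ρ * m) / ρ ^ 2 = m * (c / ρ) := by field_simp
    rw [e2]; linarith
  · rintro rfl
    rw [sub_self, map_zero, zero_mul, zero_mul] at q1
    have := sc_zero hH0 q1.symm
    have h3 : (0 : ℝ) / 2 + c / (2 * ρ) ≠ 0 := by
      rw [zero_div, zero_add]; positivity
    rcases mul_eq_zero.1 this with h | h
    · rw [h, mul_zero]
    · exact absurd h h3
  · intro hσ h0
    have hs : 1 - σ ≠ 0 := sub_ne_zero.2 (Ne.symm hσ)
    refine ez_iota hEH (min_order hH0 ?_) (by rw [← hH, map_mul, h0, zero_mul])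
    intro d hd hmin
    obtain ⟨e, rfl⟩ : ∃ e : Fin 2 →₀ ℕ, d = e + Finsupp.single 0 1 :=
      ⟨d - Finsupp.single 0 1, (tsub_add_cancel_of_le (by simpa using hd)).symm⟩
    have q3 := congrArg (coeff (e + Finsupp.single 1 1)) q1
    have q4 : C (1 - σ) * (X 0 - C (ρ ^ 2) * X 1) * pderiv 0 H =
      C (1 - σ) * (X 0 * pderiv 0 H) - C ((1 - σ) * ρ ^ 2) * (X 1 * pderiv 0 H) := by
      simp only [map_mul]; ring
    rw [q4, coeff_sub, coeff_C_mul, coeff_C_mul, coeff_C_mul, coeff_X_pd, add_comm e, coeff_X_mul,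
      coeff_pderiv, hmin _ (by simp)] at q3
    have : (1 - σ) * ρ ^ 2 * ((e 0 : ℝ) + 1) * coeff (e + Finsupp.single 0 1) H = 0 := by
      linarith
    have h5 : (e 0 : ℝ) + 1 ≠ 0 := by positivity
    simpa [hs, hρ, h5] using this

lemma pd_comm (G : B) : pderiv 1 (pderiv 0 G) = pderiv 0 (pderiv 1 G) := by
  ext d
  simp only [coeff_pderiv]
  rw [add_right_comm]
  simp
  ring

/-- Three-level lemma, for `σ = 1` and vanishing linear cofactor. -/
lemma ThreeL {A c Ra n : ℝ} (hA : 0 < A) (hc : 0 < c) (hRa : 0 < Ra) {F F' F'' : M} (hF : F ≠ 0)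
    (hE : Eu F = C n * F) (hE' : Eu F' = C (n - 1) * F') (h1 : D A F = 0)
    (h2 : D A F' + S c 1 F = C (-n) * F)
    (h3 : D A F'' + S c 1 F' + C Ra * pderiv 1 F = C (-n) * F') : ez F ≠ 0 := by
  obtain ⟨G, rfl⟩ := ker_D hA h1
  have hG : G ≠ 0 := by rintro rfl; simp at hF
  have hEB := euler_B hE
  obtain ⟨d, hd⟩ : ∃ d, coeff d G ≠ 0 := by
    by_contra! h; exact hG (by ext d; simpa using h d)
  have hn := euler_deg hE d hd
  have hEB' := congrArg (iota A) hEB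
  simp only [map_add, map_mul, map_ofNat, iota_C, iota_X0, iota_X1] at hEB'
  have hEG := congrArg (pderiv 0) hEB
  have h2' : pderiv (0 : Fin 2) (2 : B) = 0 := by
    rw [show (2 : B) = C 2 from (map_ofNat C 2).symm, pderiv_C]
  simp only [Derivation.leibniz, map_add, smul_eq_mul, pderiv_X_self, pderiv_C, h2',
    pderiv_X_of_ne (show (1 : Fin 2) ≠ 0 by decide)] at hEG
  have hEG' := congrArg (iota A) hEG
  simp only [map_add, map_mul, map_ofNat, iota_C, iota_X0, iota_X1, map_zero, map_one] at hEG'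
  rw [S_iota] at h2
  have hD : D A (F' - C (2 * c) * (X 1 * iota A (pderiv 0 G))) = 0 := by
    rw [map_sub]
    simp only [Derivation.leibniz, D_C, D_X1, D_iota, smul_eq_mul]
    simp only [map_mul, map_neg, map_one, map_ofNat] at h2 ⊢
    linear_combination h2 + hEB'
  obtain ⟨H0, hH0⟩ := ker_D hA hD
  have hF' : F' = C (2 * c) * (X 1 * iota A (pderiv 0 G)) + iota A H0 := by
    rw [← hH0]; ring
  have hEG0 : Eu (iota A (pderiv 0 G)) = C (n - 2) * iota A (pderiv 0 G) := by
    rw [Eu_iota, pd_comm]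
    simp only [map_add, map_mul, map_ofNat, iota_X0, iota_X1, map_sub]
    linear_combination hEG'
  have hEH : Eu (iota A H0) = C (n - 1) * iota A H0 := by
    rw [← hH0, map_sub, hE']
    simp only [Derivation.leibniz, Eu_C, Eu_X1, hEG0, smul_eq_mul]
    simp only [map_sub, map_ofNat, map_one, map_mul]; ring
  have hz : H0 = 0 := by
    ext e
    by_contra he
    rw [coeff_zero] at he
    have h5 := euler_deg hEH e he
    rw [hn] at h5
    have : 2 * ((d 0 + d 1 : ℕ) : ℤ) - 1 = 2 * ((e 0 + e 1 : ℕ) : ℤ) := by exact_mod_cast h5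
    omega
  rw [hz, map_zero, add_zero] at hF'
  have hpy : pderiv 1 (iota A G) = 2 * X 1 * (C A * iota A (pderiv 0 G) + iota A (pderiv 1 G)) := by
    rw [der_iota]
    simp [I1, I2, pderiv_X]; ring
  have key : D A (F'' - C (2 * c ^ 2) * (X 1 ^ 2 * iota A (pderiv 0 (pderiv 0 G)))) =
      iota A 0 + X 1 * iota A (-2 * (C (c + A * Ra) * pderiv 0 G + C Ra * pderiv 1 G))
       + X 1 ^ 2 * iota A 0 := by
    rw [hpy, hF'] at h3
    rw [map_sub]
    simp only [Derivation.leibniz, Derivation.leibniz_pow, S_C, S_X1, S_iota, D_C, D_X1, D_iota,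
      smul_eq_mul, nsmul_eq_mul, pd_comm] at h3 ⊢
    simp only [map_mul, map_neg, map_one, map_ofNat, map_add, iota_C, map_zero, map_pow] at h3 ⊢
    push_cast
    linear_combination h3 + 2 * C c * X 1 * hEG'
  obtain ⟨-, kb, -⟩ := im_quad hA key
  have kb' : C (c + A * Ra) * pderiv 0 G + C Ra * pderiv 1 G = 0 := by
    rcases mul_eq_zero.1 kb with h | h
    · simp at h
    · exact h
  refine ez_iota hE (min_order hG ?_)
  intro d hd hmin
  obtain ⟨e, rfl⟩ : ∃ e : Fin 2 →₀ ℕ, d = e + Finsupp.single 0 1 :=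
    ⟨d - Finsupp.single 0 1, (tsub_add_cancel_of_le (by simpa using hd)).symm⟩
  have q3 := congrArg (coeff e) kb'
  rw [coeff_add, coeff_C_mul, coeff_C_mul, coeff_pderiv, coeff_pderiv,
    hmin (e + Finsupp.single 1 1) (by simp), coeff_zero] at q3
  have h5 : (e 0 : ℝ) + 1 ≠ 0 := by positivity
  have h6 : c + A * Ra ≠ 0 := by positivity
  have : (c + A * Ra) * ((e 0 : ℝ) + 1) * coeff (e + Finsupp.single 0 1) G = 0 := by linarith
  simpa [h5, h6] using this

noncomputable abbrev hc (n : ℕ) (f : M) : M := homogeneousComponent n f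

/-- Shifted homogeneous component. -/
noncomputable def pc (f : M) : ℕ → M
  | 0 => 0
  | n + 1 => hc n f

lemma coeff_hc (n : ℕ) (f : M) (d : Fin 3 →₀ ℕ) :
    coeff d (hc n f) = if d.degree = n then coeff d f else 0 := by
  rw [coeff_homogeneousComponent]

lemma hc_X_mul (n : ℕ) (i : Fin 3) (f : M) : hc n (X i * f) = X i * pc f n := by
  ext d
  rw [coeff_hc, coeff_X_mul', coeff_X_mul']
  by_cases hi : i ∈ d.support
  · have h1 : 1 ≤ d i := Nat.one_le_iff_ne_zero.2 (Finsupp.mem_support_iff.1 hi)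
    obtain ⟨e, rfl⟩ : ∃ e : Fin 3 →₀ ℕ, d = e + Finsupp.single i 1 :=
      ⟨d - Finsupp.single i 1, (tsub_add_cancel_of_le (by simpa using h1)).symm⟩
    rw [if_pos hi, if_pos hi, add_tsub_cancel_right]
    rcases n with _ | n
    · simp [pc]
    · simp [pc, coeff_hc]
  · simp [hi]

lemma hc_pderiv (n : ℕ) (i : Fin 3) (f : M) : hc n (pderiv i f) = pderiv i (hc (n + 1) f) := by
  ext d
  rw [coeff_hc, coeff_pderiv, coeff_pderiv, coeff_hc]
  by_cases h : d.degree = n <;> simp [h]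

lemma pc_pderiv (n : ℕ) (i : Fin 3) (f : M) : pc (pderiv i f) n = pderiv i (pc f (n + 1)) := by
  rcases n with _ | n
  · simp [pc]
  · exact hc_pderiv n i f

lemma hc_C_mul (n : ℕ) (a : ℝ) (f : M) : hc n (C a * f) = C a * hc n f := by
  simp

lemma hc_Xpd (n : ℕ) (i j : Fin 3) (f : M) :
    hc n (X i * pderiv j f) = X i * pderiv j (hc n f) := by
  rw [hc_X_mul, pc_pderiv]; rfl

lemma hc_XXpd (n : ℕ) (i j k : Fin 3) (f : M) :
    hc n (X i * (X j * pderiv k f)) = X i * (X j * pderiv k (pc f n)) := by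
  rw [hc_X_mul]
  rcases n with _ | n
  · simp [pc]
  · rw [show pc (X j * pderiv k f) (n + 1) = hc n (X j * pderiv k f) from rfl, hc_Xpd]; rfl

noncomputable def Xd (A c σ Ra : ℝ) (f : M) : M := D A f + S c σ f + C Ra * pderiv 1 f

lemma gd_eq (A c σ Ra : ℝ) (f : M) : gdDeriv A c σ Ra f = Xd A c σ Ra f := by
  rw [gdDeriv, Xd, D_apply, S_apply]; ring

lemma hc_Xd (A c σ Ra : ℝ) (n : ℕ) (f : M) : hc n (Xd A c σ Ra f) =
    D A (pc f n) + S c σ (hc n f) + C Ra * pderiv 1 (hc (n + 1) f) := by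
  have : Xd A c σ Ra f = C A * (X 1 * (X 2 * pderiv 0 f)) - X 0 * (X 2 * pderiv 1 f)
    + X 0 * (X 1 * pderiv 2 f) + (C c * (X 2 * pderiv 0 f) - C σ * (X 0 * pderiv 0 f)
    - X 1 * pderiv 1 f - X 2 * pderiv 2 f) + C Ra * pderiv 1 f := by
    rw [Xd, D_apply, S_apply]; ring
  rw [this]
  simp only [hc, map_add, map_sub]
  simp only [hc_C_mul, hc_XXpd, hc_Xpd, hc_pderiv]
  rw [D_apply, S_apply]; ring

/-- Affine polynomial. -/
noncomputable def aff (k0 kx ky kz : ℝ) : M := C k0 + (C kx * X 0 + C ky * X 1 + C kz * X 2)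
noncomputable def lin (kx ky kz : ℝ) : M := C kx * X 0 + C ky * X 1 + C kz * X 2

lemma hc_aff (k0 kx ky kz : ℝ) (n : ℕ) (f : M) : hc n (aff k0 kx ky kz * f) =
    lin kx ky kz * pc f n + C k0 * hc n f := by
  have : aff k0 kx ky kz * f = C k0 * f + C kx * (X 0 * f) + C ky * (X 1 * f)
    + C kz * (X 2 * f) := by rw [aff]; ring
  rw [this]
  simp only [hc, map_add]
  simp only [hc_C_mul, hc_X_mul, lin]
  ring

lemma hc_eq_zero (n : ℕ) (f : M) (h : f.totalDegree < n) : hc n f = 0 :=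
  homogeneousComponent_eq_zero _ _ h

lemma eq_zero_of_hc {f : M} (h : ∀ n, hc n f = 0) : f = 0 := by
  ext d
  have := congrArg (coeff d) (h d.degree)
  rw [coeff_hc, if_pos rfl] at this
  exact this

lemma top {f : M} (hf : f ≠ 0) : ∃ l, hc l f ≠ 0 ∧ ∀ n, l < n → hc n f = 0 := by
  classical
  obtain ⟨n, hn⟩ : ∃ n, hc n f ≠ 0 := by
    by_contra! h; exact hf (eq_zero_of_hc h)
  have hle : n ≤ f.totalDegree := by
    by_contra! h; exact hn (hc_eq_zero n f h)
  refine ⟨Nat.findGreatest (fun l => hc l f ≠ 0) f.totalDegree,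
    Nat.findGreatest_spec (P := fun l => hc l f ≠ 0) hle hn, ?_⟩
  intro m hm
  by_cases hmt : m ≤ f.totalDegree
  · by_contra h
    exact Nat.findGreatest_is_greatest hm hmt h
  · exact hc_eq_zero m f (by omega)

lemma Eu_hc (n : ℕ) (f : M) : Eu (hc n f) = C (n : ℝ) * hc n f := by
  have := (homogeneousComponent_isHomogeneous n f).sum_X_mul_pderiv
  rw [Fin.sum_univ_three] at this
  rw [Eu_apply, this]
  simp

lemma Eu_pc (n : ℕ) (f : M) : Eu (pc f n) = C ((n : ℝ) - 1) * pc f n := by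
  rcases n with _ | n
  · simp [pc]
  · have := Eu_hc n f
    simpa [pc] using this

lemma aff_of_deg {p : M} (h : p.totalDegree ≤ 1) : ∃ k0 kx ky kz, p = aff k0 kx ky kz := by
  have h1 : p = hc 0 p + hc 1 p := by
    ext d
    rw [coeff_add, coeff_hc, coeff_hc]
    by_cases h0 : d.degree = 0
    · simp [h0]
    by_cases h1 : d.degree = 1
    · simp [h1]
    · rw [if_neg h0, if_neg h1, add_zero]
      by_contra hne
      have := le_totalDegree (mem_support_iff.2 hne)
      have h3 : d.degree = d.sum fun _ e => e := rfl
      omega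
  have h2 := Eu_hc 1 p
  rw [Eu_apply] at h2
  have h3 : ∀ i, pderiv i (hc 1 p) = C (coeff 0 (pderiv i p)) := by
    intro i
    rw [← homogeneousComponent_zero]
    exact (hc_pderiv 0 i p).symm
  have h4 : hc 0 p = C (coeff 0 p) := homogeneousComponent_zero _
  refine ⟨coeff 0 p, coeff 0 (pderiv 0 p), coeff 0 (pderiv 1 p), coeff 0 (pderiv 2 p), ?_⟩
  rw [aff]
  rw [h3, h3, h3] at h2
  nth_rewrite 1 [h1]
  rw [h4]
  simp only [Nat.cast_one, map_one, one_mul] at h2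
  rw [← h2]; ring

lemma deg_Xd (A c σ Ra : ℝ) (f : M) : (Xd A c σ Ra f).totalDegree ≤ f.totalDegree + 1 := by
  have hz : ∀ n, f.totalDegree + 1 < n → hc n (Xd A c σ Ra f) = 0 := by
    intro n hn
    obtain ⟨m, rfl⟩ : ∃ m, n = m + 1 := ⟨n - 1, by omega⟩
    rw [hc_Xd, show pc f (m + 1) = hc m f from rfl, hc_eq_zero m f (by omega),
      hc_eq_zero (m + 1) f (by omega), hc_eq_zero (m + 1 + 1) f (by omega)]
    simp
  refine Finset.sup_le fun d hd => ?_
  by_contra! hlt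
  have := congrArg (coeff d) (hz d.degree hlt)
  rw [coeff_hc, if_pos rfl, coeff_zero] at this
  exact mem_support_iff.1 hd this

lemma cofactor_aff {A c σ Ra : ℝ} {h K : M} (hh : h ≠ 0) (e : Xd A c σ Ra h = h * K) :
    ∃ k0 kx ky kz, K = aff k0 kx ky kz := by
  apply aff_of_deg
  by_cases hK : K = 0
  · simp [hK]
  · have h1 := deg_Xd A c σ Ra h
    rw [e, totalDegree_mul_of_isDomain hh hK] at h1
    omega

lemma level {A c σ Ra k0 kx ky kz l0 lx ly lz : ℝ} {f h : M}
    (e : Xd A c σ Ra f = aff k0 kx ky kz * f + aff l0 lx ly lz * h) (n : ℕ) :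
    D A (pc f n) + S c σ (hc n f) + C Ra * pderiv 1 (hc (n + 1) f) =
      lin kx ky kz * pc f n + C k0 * hc n f + (lin lx ly lz * pc h n + C l0 * hc n h) := by
  have := congrArg (hc n) e
  rw [hc_Xd] at this
  rw [this]
  simp only [hc, map_add]
  simp only [hc_aff]

lemma pc_succ (f : M) (n : ℕ) : pc f (n + 1) = hc n f := rfl

lemma lin_y (k : ℝ) : lin 0 k 0 = C k * X 1 := by simp [lin]

/-- Universal lemma on Darboux polynomials. -/
lemma univ {A c σ Ra k0 kx ky kz : ℝ} (hA : 0 < A) (hc0 : 0 < c) (hRa : 0 < Ra) {f : M} (hf : f ≠ 0)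
    (e : Xd A c σ Ra f = aff k0 kx ky kz * f) :
    kx = 0 ∧ kz = 0 ∧ ∃ n : ℕ, (n : ℝ) = c * ky / A - k0 ∧ hc n f ≠ 0 ∧ (∀ m, n < m → hc m f = 0) ∧
      D A (hc n f) = C ky * (X 1 * hc n f) ∧ ez (hc n f) ≠ 0 := by
  obtain ⟨n, hn, htop⟩ := top hf
  have lev : ∀ n, D A (pc f n) + S c σ (hc n f) + C Ra * pderiv 1 (hc (n + 1) f) =
      lin kx ky kz * pc f n + C k0 * hc n f := by
    intro n
    have := level (f := f) (h := 0) (l0 := 0) (lx := 0) (ly := 0) (lz := 0)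
      (by rw [e, mul_zero, add_zero]) n
    rw [this]
    rcases n with _ | n <;> simp [pc]
  have h1 := lev (n + 1)
  rw [pc_succ, htop (n + 1) (by omega), htop (n + 1 + 1) (by omega)] at h1
  simp only [map_zero, mul_zero, add_zero] at h1
  obtain ⟨rfl, rfl⟩ := eigen_gen hA hn h1
  refine ⟨rfl, rfl, n, ?_⟩
  rw [lin_y, mul_assoc] at h1
  have h2 := lev n
  rw [htop (n + 1) (by omega), lin_y, mul_assoc] at h2
  simp only [map_zero, mul_zero, add_zero] at h2
  obtain ⟨t1, t2, t3⟩ := TL hA hc0 hn (Eu_hc n f) h1 h2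
  refine ⟨t1, hn, htop, h1, ?_⟩
  by_cases hσ : σ = 1
  · subst hσ
    have hk := t2 rfl
    subst hk
    have hk0 : k0 = -n := by rw [t1]; simp
    subst hk0
    simp only [map_zero, zero_mul, zero_add] at h1 h2
    rcases n with _ | n
    · refine ThreeL (F' := pc f 0) (F'' := 0) hA hc0 hRa hn (Eu_hc 0 f) ?_ h1 h2 ?_
      · simp [pc]
      · simp [pc]
    · refine ThreeL (F' := pc f (n + 1)) (F'' := pc f n) hA hc0 hRa hn (Eu_hc _ f)
        (Eu_pc _ f) h1 h2 ?_
      have h3 := lev n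
      rw [lin_y] at h3
      simp only [map_zero, zero_mul, zero_add] at h3
      exact h3
  · exact t3 hσ

lemma ez_X0 : ez (X 0) = 0 := by simp [ez]
lemma ez_X1 : ez (X 1) = 0 := by simp [ez]
lemma ez_X2 : ez (X 2) = 1 := by simp [ez]
lemma ez_C (a : ℝ) : ez (C a) = a := by simp [ez]

lemma main_claim {A c σ Ra k0 kx ky kz l0 lx ly lz : ℝ} (hA : 0 < A) (hc0 : 0 < c) (hRa : 0 < Ra)
    {g h : M} (hh : h ≠ 0) (e : Xd A c σ Ra h = aff k0 kx ky kz * h)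
    (e' : Xd A c σ Ra g = aff k0 kx ky kz * g + aff l0 lx ly lz * h) : ∃ t : ℝ, g = C t * h := by
  obtain ⟨rfl, rfl, n, hnk, hn, htop, hDn, hezn⟩ := univ hA hc0 hRa hh e
  obtain ⟨ρ, m, rfl, rfl⟩ := eigen_y' hA hn hDn
  obtain ⟨H, hH⟩ := mul_v hA hDn
  have hH0 := H_ne hn hH
  have lev := level e'
  have hg : ∀ l, n < l → hc l g = 0 := by
    by_cases hg0 : g = 0
    · intro l _; simp [hg0]
    obtain ⟨l, hl, hlt⟩ := top hg0
    suffices hle : l ≤ n from fun j hj => hlt j (by omega)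
    by_contra! hlt2
    have h1 := lev (l + 1)
    rw [pc_succ, pc_succ, hlt (l + 1) (by omega), hlt (l + 1 + 1) (by omega), htop l hlt2,
      htop (l + 1) (by omega), lin_y, mul_assoc] at h1
    simp only [map_zero, mul_zero, add_zero] at h1
    obtain ⟨j, rfl⟩ : ∃ j, l = j + 1 := ⟨l - 1, by omega⟩
    by_cases hj : j = n
    · subst hj
      obtain ⟨H', hH'⟩ := mul_v hA h1
      have hH0' := H_ne hl hH'
      have w := Eu_H (Eu_hc _ _) hH
      have w' := Eu_H (Eu_hc _ _) hH'
      obtain ⟨d, hd⟩ := MvPolynomial.ne_zero_iff.1 hH0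
      obtain ⟨d', hd'⟩ := MvPolynomial.ne_zero_iff.1 hH0'
      have r1 := euler_deg w d hd
      have r2 := euler_deg w' d' hd'
      have r1' : j + m = 2 * (d 0 + d 1) := by exact_mod_cast r1
      have r2' : j + 1 + m = 2 * (d' 0 + d' 1) := by exact_mod_cast r2
      omega
    · have h2 := lev (j + 1)
      rw [pc_succ h, hlt (j + 1 + 1) (by omega), htop j (by omega), htop (j + 1) (by omega),
        lin_y, mul_assoc] at h2
      simp only [map_zero, mul_zero, add_zero] at h2
      obtain ⟨t1, -, -⟩ := TL hA hc0 hl (Eu_hc _ g) h1 h2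
      rw [← hnk] at t1
      have : j + 1 = n := by exact_mod_cast t1
      omega
  have h1 := lev (n + 1)
  rw [pc_succ, pc_succ, hg (n + 1) (by omega), hg (n + 1 + 1) (by omega), htop (n + 1) (by omega),
    lin_y] at h1
  simp only [map_zero, mul_zero, add_zero] at h1
  obtain ⟨rfl, rfl, rfl⟩ := im_lin hA hH0 (P := hc n g * vv ρ ^ m) (k := lx) (l := ly) (m := lz) (by
    rw [Derivation.leibniz, D_vpow, h1, ← hH, lin]
    simp only [smul_eq_mul]; ring)
  obtain ⟨t, ht⟩ : ∃ t, t = ez (hc n g) / ez (hc n h) := ⟨_, rfl⟩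
  have haff : aff l0 0 0 0 = C l0 := by simp [aff]
  rw [haff] at e'
  obtain ⟨q, hq⟩ : ∃ q, q = g - C t * h := ⟨_, rfl⟩
  have eq : Xd (ρ ^ 2) c σ Ra q = aff k0 0 (ρ * m) 0 * q + aff l0 0 0 0 * h := by
    have hlin : Xd (ρ ^ 2) c σ Ra q = Xd (ρ ^ 2) c σ Ra g - C t * Xd (ρ ^ 2) c σ Ra h := by
      simp only [hq, Xd, map_sub, Derivation.leibniz, D_C, S_C, pderiv_C, smul_eq_mul]; ring
    rw [hlin, e, e', haff, hq]; ring
  have hcq : ∀ j, hc j q = hc j g - C t * hc j h := by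
    intro j; rw [hq, ← hc_C_mul]; simp only [hc, map_sub]
  have hezq : ez (hc n q) = 0 := by
    rw [hcq, map_sub, map_mul, ez_C, ht]; field_simp; ring
  have hDq : D (ρ ^ 2) (hc n q) = C (ρ * m) * (X 1 * hc n q) := by
    rw [hcq, map_sub, Derivation.leibniz, D_C, hDn, h1, lin]
    simp only [smul_eq_mul, map_zero]; ring
  have levq := level eq n
  have hqtop : hc (n + 1) q = 0 := by
    rw [hcq, hg _ (by omega), htop _ (by omega)]; simp
  have hdx : ez (pderiv 0 (hc n q)) = 0 := by
    have h3 := congrArg (fun p => ez (pderiv 1 p)) hDq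
    simp only [D_apply] at h3
    simp [pderiv_X, ez_X0, ez_X1, ez_X2, ez_C, hezq] at h3
    rcases h3 with h3 | h3
    · exact h3
    · rw [h3] at hA; simp at hA
  have hdz : ez (pderiv 2 (hc n q)) = 0 := by
    have h3 := congrArg ez (Eu_hc n q)
    rw [Eu_apply] at h3
    simpa only [map_add, map_mul, ez_X0, ez_X1, ez_X2, hezq, zero_mul, mul_zero, zero_add,
      one_mul] using h3
  have hl0 : l0 = 0 := by
    have h3 := congrArg ez levq
    rw [hqtop, D_apply, S_apply] at h3
    simp only [map_add, map_sub, map_mul, map_neg, map_zero, lin, ez_X0, ez_X1, ez_X2, ez_C, hezq,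
      hdx, hdz, zero_mul, mul_zero, zero_add, add_zero, neg_zero] at h3
    rcases mul_eq_zero.1 h3.symm with h | h
    · exact h
    · exact absurd h hezn
  subst hl0
  rw [haff, map_zero, zero_mul, add_zero] at eq
  by_cases hq0 : q = 0
  · exact ⟨t, by rw [hq0] at hq; exact (sub_eq_zero.1 hq.symm)⟩
  · exfalso
    obtain ⟨-, -, n', hnk', -, -, -, hez'⟩ := univ hA hc0 hRa hq0 eq
    rw [← hnk] at hnk'
    have : n' = n := by exact_mod_cast hnk'
    subst this
    exact hez' hezq

end GD

/-- For positive parameters, the Glukhovsky–Dolzhansky system has no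
exponential factors: if `exp(g/h)` (with `g, h` coprime, `h ≠ 0`) has a polynomial
cofactor `L` of degree at most 1, i.e. `h·X(g) − g·X(h) = L·h²`, then `g` and `h`
are both constant. -/
theorem gd_no_exponential_factors
    (A C σ Ra : ℝ) (hA : 0 < A) (hC : 0 < C) (hσ : 0 < σ) (hRa : 0 < Ra)
    (g h L : MvPolynomial (Fin 3) ℝ) (hh : h ≠ 0) (hcop : IsRelPrime g h)
    (hL : L.totalDegree ≤ 1)
    (hexp : h * gdDeriv A C σ Ra g - g * gdDeriv A C σ Ra h = L * h ^ 2) :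
    (∃ c : ℝ, g = MvPolynomial.C c) ∧ (∃ c : ℝ, h = MvPolynomial.C c) := by
  simp only [GD.gd_eq] at hexp
  have hdvd : h ∣ GD.Xd A C σ Ra h := by
    apply IsRelPrime.dvd_of_dvd_mul_left hcop.symm
    exact ⟨GD.Xd A C σ Ra g - L * h, by linear_combination -hexp⟩
  obtain ⟨K, hK⟩ := hdvd
  obtain ⟨k0, kx, ky, kz, rfl⟩ := GD.cofactor_aff hh hK
  obtain ⟨l0, lx, ly, lz, rfl⟩ := GD.aff_of_deg hL
  have hg : GD.Xd A C σ Ra g = GD.aff k0 kx ky kz * g + GD.aff l0 lx ly lz * h := by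
    apply mul_left_cancel₀ hh
    linear_combination hexp + g * hK
  obtain ⟨t, rfl⟩ := GD.main_claim hA hC hRa hh (hK.trans (mul_comm _ _)) hg
  have hu : IsUnit h := hcop (dvd_mul_left h _) dvd_rfl
  obtain ⟨r, -, rfl⟩ := isUnit_iff_eq_C_of_isReduced.1 hu
  exact ⟨⟨t * r, by rw [map_mul]⟩, ⟨r, rfl⟩⟩
end
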